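/- arXiv:2501.06840 — 3 statements merged into one kernel-verified Lean document; each statement's English description precedes it below -/
import Mathlib

section
/- Let n ≥ 3 and let φ : M_n → M_n be a continuous, commutativity-preserving and spectrum-shrinking map. Then there exists T ∈ GL(n) such that either φ(X) = T X T⁻¹ for all X ∈ M_n, or φ(X) = T Xᵗ T⁻¹ for all X ∈ M_n (where Xᵗ denotes the transpose). (This strengthens Šemrl's theorem, which assumes φ is spectrum-preserving.) -/
open Matrix

namespace PMn

lemma preconn_of_lines {E : Type*} [AddCommGroup E] [Module ℂ E] [TopologicalSpace E]
    [ContinuousAdd E] [ContinuousSMul ℂ E] (V : Set E)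
    (h : ∀ a ∈ V, ∀ b ∈ V, {c : ℂ | a + c • (b - a) ∉ V}.Finite) : IsPreconnected V := by
  apply isPreconnected_of_forall_pair
  intro a ha b hb
  have hc := (h a ha b hb).countable.isConnected_compl_of_one_lt_rank (by simp)
  refine ⟨(fun c : ℂ => a + c • (b - a)) '' {c : ℂ | a + c • (b - a) ∉ V}ᶜ, ?_, ?_, ?_, ?_⟩
  · rintro _ ⟨c, hc, rfl⟩
    simpa using hc
  · exact ⟨0, by simpa using ha, by simp⟩
  · exact ⟨1, by simpa using hb, by simp⟩
  · exact hc.isPreconnected.image _ (by fun_prop)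

lemma const_of_closed {E ι : Type*} [TopologicalSpace E] [PreconnectedSpace E] [Finite ι]
    (Z : ι → Set E) (hcl : ∀ i, IsClosed (Z i)) (hcov : ∀ x, ∃ i, x ∈ Z i)
    (hdis : ∀ i j x, x ∈ Z i → x ∈ Z j → i = j) (i : ι) (x : E) (hx : x ∈ Z i) (y : E) :
    y ∈ Z i := by
  have hcomp : (Z i)ᶜ = ⋃ j ∈ {j | j ≠ i}, Z j := by
    ext z
    simp only [Set.mem_compl_iff, Set.mem_ofPred_eq, Set.mem_iUnion, exists_prop]
    constructor
    · intro hz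
      obtain ⟨j, hj⟩ := hcov z
      exact ⟨j, fun h => hz (h ▸ hj), hj⟩
    · rintro ⟨j, hj, hz⟩ hz'
      exact hj (hdis _ _ _ hz hz')
  have ho : IsOpen (Z i) := by
    rw [← isClosed_compl_iff, hcomp]
    exact (Set.toFinite _).isClosed_biUnion (fun j _ => hcl j)
  have : Z i = Set.univ := IsClopen.eq_univ ⟨hcl i, ho⟩ ⟨x, hx⟩
  simp [this]

lemma finite_of_poly (p : Polynomial ℂ) (c₀ : ℂ) (h : p.eval c₀ ≠ 0) :
    {c : ℂ | p.eval c = 0}.Finite := by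
  have hp : p ≠ 0 := by rintro rfl; simp at h
  refine (p.roots.toFinset.finite_toSet).subset ?_
  intro c hc
  simp [hp]
  exact hc

variable {n : ℕ}

/-- The pencil of matrices over `ℂ[t]`. -/
noncomputable def pencil (A B : Matrix (Fin n) (Fin n) ℂ) :
    Matrix (Fin n) (Fin n) (Polynomial ℂ) :=
  A.map Polynomial.C + (Polynomial.X : Polynomial ℂ) • B.map Polynomial.C

lemma pencil_map (A B : Matrix (Fin n) (Fin n) ℂ) (c : ℂ) :
    (pencil A B).map (Polynomial.evalRingHom c) = A + c • B := by
  ext i j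
  simp [pencil]
  ring

lemma finite_det (A B : Matrix (Fin n) (Fin n) ℂ) (c₀ : ℂ) (h : (A + c₀ • B).det ≠ 0) :
    {c : ℂ | (A + c • B).det = 0}.Finite := by
  have key : ∀ c, (pencil A B).det.eval c = (A + c • B).det := by
    intro c
    rw [← pencil_map, ← Polynomial.coe_evalRingHom, RingHom.map_det]
    rfl
  simp_rw [← key] at h ⊢
  exact finite_of_poly _ _ h

lemma finite_inj (a b : Fin n → ℂ) (c₀ : ℂ) (h : Function.Injective (a + c₀ • b)) :
    {c : ℂ | ¬ Function.Injective (a + c • b)}.Finite := by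
  have : {c : ℂ | ¬ Function.Injective (a + c • b)} ⊆
      ⋃ p ∈ {p : Fin n × Fin n | p.1 ≠ p.2},
        {c : ℂ | (Polynomial.C (a p.1 - a p.2) +
          Polynomial.X * Polynomial.C (b p.1 - b p.2)).eval c = 0} := by
    intro c hc
    simp only [Function.Injective, not_forall, Set.mem_ofPred_eq] at hc
    obtain ⟨i, j, hij, hne⟩ := hc
    simp only [Set.mem_iUnion]
    refine ⟨(i, j), hne, ?_⟩
    simp at hij ⊢
    linear_combination hij
  refine Set.Finite.subset (Set.Finite.biUnion (Set.toFinite _) ?_) this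
  rintro ⟨i, j⟩ hij
  refine finite_of_poly _ c₀ ?_
  intro h0
  apply hij
  apply h
  simp at h0 ⊢
  linear_combination h0

lemma finite_sep (A B : Matrix (Fin n) (Fin n) ℂ) (c₀ : ℂ) (h : (A + c₀ • B).charpoly.Separable) :
    {c : ℂ | ¬ (A + c • B).charpoly.Separable}.Finite := by
  have key : ∀ c, (Polynomial.resultant (pencil A B).charpoly (pencil A B).charpoly.derivative
      n (n - 1)).eval c = 0 ↔ ¬ (A + c • B).charpoly.Separable := by
    intro c
    rw [← Polynomial.coe_evalRingHom, ← Polynomial.resultant_map_map,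
      ← Polynomial.derivative_map, ← Matrix.charpoly_map, pencil_map, Polynomial.Separable]
    have h1 : (A + c • B).charpoly.natDegree = n := by simp
    have h2 : (A + c • B).charpoly.derivative.natDegree = n - 1 := by
      rw [Polynomial.natDegree_derivative, h1]
    have h3 := Polynomial.resultant_eq_zero_iff (f := (A + c • B).charpoly)
      (g := (A + c • B).charpoly.derivative)
    rw [h1, h2] at h3
    rw [h3]
    have h4 : (A + c • B).charpoly ≠ 0 := (Matrix.charpoly_monic _).ne_zero
    simp [h4]
  simp_rw [← key]
  refine finite_of_poly _ c₀ ?_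
  rw [Ne, key, not_not]
  exact h

lemma dense_of_lines {E : Type*} [AddCommGroup E] [Module ℂ E] [TopologicalSpace E]
    [ContinuousAdd E] [ContinuousSMul ℂ E] (V : Set E)
    (h : ∀ a, ∃ b, {c : ℂ | a + c • b ∉ V}.Finite) : Dense V := by
  intro a
  obtain ⟨b, hb⟩ := h a
  have hd : Dense ({c : ℂ | a + c • b ∉ V}ᶜ) := hb.countable.dense_compl ℂ
  have h1 : (fun c : ℂ => a + c • b) 0 ∈ closure V := by
    refine map_mem_closure (f := fun c : ℂ => a + c • b)
      (s := {c : ℂ | a + c • b ∉ V}ᶜ) (by fun_prop) (hd 0) ?_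
    intro c hc
    simpa using hc
  simpa using h1

lemma exists_inj (n : ℕ) : Function.Injective (fun i : Fin n => ((i : ℕ) : ℂ)) := by
  intro i j h
  simpa [Fin.ext_iff] using h

lemma dense_inj : Dense {d : Fin n → ℂ | Function.Injective d} := by
  apply dense_of_lines
  intro a
  refine ⟨(fun i : Fin n => ((i : ℕ) : ℂ)) - a, ?_⟩
  have := finite_inj a ((fun i : Fin n => ((i : ℕ) : ℂ)) - a) 1 (by simpa using exists_inj n)
  simpa using this

lemma diag_of_eig (A : Matrix (Fin n) (Fin n) ℂ) (d : Fin n → ℂ) (hd : Function.Injective d)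
    (h : ∀ i, A.charpoly.eval (d i) = 0) :
    ∃ T : Matrix (Fin n) (Fin n) ℂ, IsUnit T ∧ A = T * diagonal d * T⁻¹ := by
  have h1 : ∀ i, ∃ v : Fin n → ℂ, v ≠ 0 ∧ A *ᵥ v = d i • v := by
    intro i
    have := h i
    rw [Matrix.eval_charpoly, ← Matrix.exists_mulVec_eq_zero_iff] at this
    obtain ⟨v, hv, hv'⟩ := this
    refine ⟨v, hv, ?_⟩
    rw [Matrix.sub_mulVec, sub_eq_zero] at hv'
    rw [← hv']
    simp
  choose v hv hAv using h1
  have hli : LinearIndependent ℂ v := by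
    refine Module.End.eigenvectors_linearIndependent' (Matrix.toLin' A) d hd v ?_
    intro i
    rw [Module.End.hasEigenvector_iff, Module.End.mem_eigenspace_iff]
    exact ⟨by simpa using hAv i, hv i⟩
  let T : Matrix (Fin n) (Fin n) ℂ := Matrix.of fun i j => v j i
  have hT : IsUnit T := by
    rw [← Matrix.linearIndependent_cols_iff_isUnit]
    exact hli
  refine ⟨T, hT, ?_⟩
  have hAT : A * T = T * diagonal d := by
    ext i j
    have := congrFun (hAv j) i
    simp only [Matrix.mul_diagonal]
    rw [Matrix.mul_apply]
    simp only [Matrix.mulVec, dotProduct, Pi.smul_apply, smul_eq_mul] at this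
    simp only [T, Matrix.of_apply]
    rw [this, mul_comm]
  rw [← hAT, Matrix.mul_assoc, Matrix.mul_nonsing_inv _ ((Matrix.isUnit_iff_isUnit_det _).1 hT),
    Matrix.mul_one]

lemma diag_of_sep (A : Matrix (Fin n) (Fin n) ℂ) (h : A.charpoly.Separable) :
    ∃ (T : Matrix (Fin n) (Fin n) ℂ) (d : Fin n → ℂ), IsUnit T ∧ A = T * diagonal d * T⁻¹ := by
  classical
  have hs := IsAlgClosed.splits A.charpoly
  have hnd := Polynomial.nodup_roots h
  have hcard : A.charpoly.roots.card = n := by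
    have := hs.natDegree_eq_card_roots
    rw [← this]; simp
  have hc2 : A.charpoly.roots.toFinset.card = n := by
    rw [Multiset.toFinset_card_of_nodup hnd, hcard]
  let e := A.charpoly.roots.toFinset.equivFinOfCardEq hc2
  obtain ⟨T, hT, hA⟩ := diag_of_eig A (fun i => (e.symm i : ℂ))
    (Subtype.val_injective.comp e.symm.injective) (by
      intro i
      have := (e.symm i).2
      rw [Multiset.mem_toFinset, Polynomial.mem_roots'] at this
      exact this.2)
  exact ⟨T, _, hT, hA⟩

lemma dense_diag : Dense {A : Matrix (Fin n) (Fin n) ℂ |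
    ∃ (T : Matrix (Fin n) (Fin n) ℂ) (d : Fin n → ℂ), IsUnit T ∧ A = T * diagonal d * T⁻¹} := by
  apply dense_of_lines
  intro A
  refine ⟨diagonal (fun i : Fin n => ((i : ℕ) : ℂ)) - A, ?_⟩
  refine (finite_sep A (diagonal (fun i : Fin n => ((i : ℕ) : ℂ)) - A) 1 ?_).subset ?_
  · simp only [one_smul, add_sub_cancel, Matrix.charpoly_diagonal]
    rw [Polynomial.separable_prod_X_sub_C_iff]
    exact exists_inj n
  · intro c hc hs
    exact hc (diag_of_sep _ hs)


/-- The hypotheses on the map. -/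
structure Good (φ : Matrix (Fin n) (Fin n) ℂ → Matrix (Fin n) (Fin n) ℂ) : Prop where
  cont : Continuous φ
  comm : ∀ X Y, X * Y = Y * X → φ X * φ Y = φ Y * φ X
  shrink : ∀ X, spectrum ℂ (φ X) ⊆ spectrum ℂ X

variable {φ : Matrix (Fin n) (Fin n) ℂ → Matrix (Fin n) (Fin n) ℂ}

lemma inv_mul_self {S : Matrix (Fin n) (Fin n) ℂ} (hS : IsUnit S) : S⁻¹ * S = 1 :=
  Matrix.nonsing_inv_mul _ ((Matrix.isUnit_iff_isUnit_det _).1 hS)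

lemma mul_inv_self {S : Matrix (Fin n) (Fin n) ℂ} (hS : IsUnit S) : S * S⁻¹ = 1 :=
  Matrix.mul_nonsing_inv _ ((Matrix.isUnit_iff_isUnit_det _).1 hS)

lemma isUnit_inv {S : Matrix (Fin n) (Fin n) ℂ} (hS : IsUnit S) : IsUnit S⁻¹ :=
  IsUnit.of_mul_eq_one _ (inv_mul_self hS)

lemma conj_mul {S : Matrix (Fin n) (Fin n) ℂ} (hS : IsUnit S) (X Y : Matrix (Fin n) (Fin n) ℂ) :
    (S * X * S⁻¹) * (S * Y * S⁻¹) = S * (X * Y) * S⁻¹ := by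
  calc _ = S * X * (S⁻¹ * S) * Y * S⁻¹ := by simp only [Matrix.mul_assoc]
    _ = _ := by rw [inv_mul_self hS]; simp only [Matrix.mul_assoc, Matrix.mul_one]

lemma spec_conj {S : Matrix (Fin n) (Fin n) ℂ} (hS : IsUnit S) (X : Matrix (Fin n) (Fin n) ℂ) :
    spectrum ℂ (S * X * S⁻¹) = spectrum ℂ X := by
  obtain ⟨u, rfl⟩ := hS
  rw [← Matrix.coe_units_inv, spectrum.units_conjugate]

lemma Good.conj (h : Good φ) {S T : Matrix (Fin n) (Fin n) ℂ} (hS : IsUnit S) (hT : IsUnit T) :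
    Good (fun X => T * φ (S * X * S⁻¹) * T⁻¹) where
  cont := by
    have := h.cont
    fun_prop
  comm X Y hXY := by
    rw [conj_mul hT, conj_mul hT, h.comm]
    rw [conj_mul hS, conj_mul hS, hXY]
  shrink X := by
    rw [spec_conj hT]
    refine (h.shrink _).trans ?_
    rw [spec_conj hS]

/-- Pairs (invertible matrix, distinct eigenvalues). -/
def V (n : ℕ) : Set (Matrix (Fin n) (Fin n) ℂ × (Fin n → ℂ)) :=
  {p | p.1.det ≠ 0 ∧ Function.Injective p.2}

lemma preconn_V : IsPreconnected (V n) := by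
  apply preconn_of_lines
  rintro ⟨S, d⟩ ⟨hS, hd⟩ ⟨S', d'⟩ ⟨hS', hd'⟩
  have h1 := finite_det S (S' - S) 0 (by simpa using hS)
  have h2 := finite_inj d (d' - d) 0 (by simpa using hd)
  refine (h1.union h2).subset ?_
  intro c hc
  by_contra h
  apply hc
  simp only [Set.mem_union, not_or] at h
  exact ⟨h.1, not_not.1 h.2⟩

lemma preconn_inj : IsPreconnected {d : Fin n → ℂ | Function.Injective d} := by
  apply preconn_of_lines
  intro a ha b hb
  exact finite_inj a (b - a) 0 (by simpa using ha)

open Polynomial in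
lemma prod_inj (d : Fin n → ℂ) (hd : Function.Injective d) (m m' : Fin n → ℕ)
    (h : ∏ i, (X - C (d i)) ^ (m i) = ∏ i, (X - C (d i)) ^ (m' i)) : m = m' := by
  have key : ∀ m : Fin n → ℕ, ∀ i,
      (∏ i, (X - C (d i)) ^ (m i)).roots.count (d i) = m i := by
    intro m i
    rw [Polynomial.roots_prod]
    · simp only [Polynomial.roots_pow, Polynomial.roots_X_sub_C]
      rw [Multiset.count_bind]
      simp only [Multiset.count_nsmul, Multiset.count_singleton, hd.eq_iff]
      simp [List.sum_ofFn]
    · rw [Finset.prod_ne_zero_iff]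
      intro j _
      exact pow_ne_zero _ (X_sub_C_ne_zero _)
  funext i
  rw [← key m i, ← key m' i, h]

open Polynomial in
lemma exists_mult (d : Fin n → ℂ) (hd : Function.Injective d) (A : Matrix (Fin n) (Fin n) ℂ)
    (hA : spectrum ℂ A ⊆ Set.range d) :
    ∃ m : Fin n → Fin (n + 1), A.charpoly = ∏ i, (X - C (d i)) ^ (m i : ℕ) := by
  classical
  have hs := IsAlgClosed.splits A.charpoly
  have hcard : A.charpoly.roots.card = n := by
    have := hs.natDegree_eq_card_roots
    rw [← this]; simp
  refine ⟨fun i => ⟨A.charpoly.roots.count (d i), ?_⟩, ?_⟩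
  · have := Multiset.count_le_card (d i) A.charpoly.roots
    lia
  · simp only
    have h1 := hs.eq_prod_roots_of_monic (Matrix.charpoly_monic A)
    have h2 : A.charpoly = ∏ a ∈ A.charpoly.roots.toFinset, (X - C a) ^ A.charpoly.roots.count a := by
      conv_lhs => rw [h1]
      rw [Finset.prod_multiset_map_count]
    have h3 : ∏ i, (X - C (d i)) ^ A.charpoly.roots.count (d i) =
        ∏ a ∈ Finset.univ.image d, (X - C a) ^ A.charpoly.roots.count a := by
      rw [Finset.prod_image]
      exact fun _ _ _ _ h => hd h
    rw [h3]
    conv_lhs => rw [h2]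
    apply Finset.prod_subset
    · intro a ha
      rw [Multiset.mem_toFinset, mem_roots', ← Matrix.mem_spectrum_iff_isRoot_charpoly] at ha
      obtain ⟨i, rfl⟩ := hA ha.2
      simp
    · intro a _ ha
      rw [Multiset.mem_toFinset] at ha
      rw [Multiset.count_eq_zero_of_notMem ha, pow_zero]

lemma continuous_inv_V : Continuous (fun p : V n => (p.1.1)⁻¹) := by
  simp_rw [Matrix.inv_def, Ring.inverse_eq_inv']
  refine Continuous.smul (Continuous.inv₀ (f := fun p : V n => p.1.1.det) (by fun_prop)
    (fun p => p.2.1)) ?_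
  exact Continuous.matrix_adjugate (by fun_prop)

/-- The map evaluated on the diagonalizable matrix with given data. -/
noncomputable def F (φ : Matrix (Fin n) (Fin n) ℂ → Matrix (Fin n) (Fin n) ℂ) (p : V n) :=
  φ (p.1.1 * diagonal p.1.2 * (p.1.1)⁻¹)

lemma continuous_F (h : Good φ) : Continuous (F φ) := by
  unfold F
  refine h.cont.comp ?_
  refine Continuous.matrix_mul ?_ continuous_inv_V
  fun_prop

lemma spectrum_diag (d : Fin n → ℂ) : spectrum ℂ (diagonal d) = Set.range d := by
  ext z
  rw [Matrix.mem_spectrum_iff_isRoot_charpoly, Matrix.charpoly_diagonal, Polynomial.IsRoot,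
    Polynomial.eval_prod, Finset.prod_eq_zero_iff]
  simp [sub_eq_zero, eq_comm]

open Polynomial in
lemma full_spec (h : Good φ) (d : Fin n → ℂ) (hd : Function.Injective d) (i : Fin n) :
    (φ (diagonal d)).charpoly.eval (d i) = 0 := by
  classical
  have : PreconnectedSpace (V n) := isPreconnected_iff_preconnectedSpace.1 preconn_V
  let Z : (Fin n → Fin (n + 1)) → Set (V n) := fun m =>
    {p | (F φ p).charpoly = ∏ i, (X - C (p.1.2 i)) ^ (m i : ℕ)}
  have hcl : ∀ m, IsClosed (Z m) := by
    intro m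
    have : Z m = ⋂ z : ℂ, {p : V n | (Matrix.scalar (Fin n) z - F φ p).det =
        ∏ i, (z - p.1.2 i) ^ (m i : ℕ)} := by
      ext p
      simp only [Set.mem_iInter]
      constructor
      · intro hp z
        have := congrArg (Polynomial.eval z) hp
        simpa [Matrix.eval_charpoly, Polynomial.eval_prod] using this
      · intro hp
        apply Polynomial.funext
        intro z
        have := hp z
        simpa [Matrix.eval_charpoly, Polynomial.eval_prod] using this
    rw [this]
    refine isClosed_iInter fun z => isClosed_eq ?_ ?_
    · have := continuous_F h
      fun_prop
    · fun_prop
  have hcov : ∀ p, ∃ m, p ∈ Z m := by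
    intro p
    refine exists_mult p.1.2 p.2.2 (F φ p) ?_
    refine (h.shrink _).trans ?_
    rw [spec_conj, spectrum_diag]
    exact (Matrix.isUnit_iff_isUnit_det _).2 (isUnit_iff_ne_zero.2 p.2.1)
  have hdis : ∀ m m' p, p ∈ Z m → p ∈ Z m' → m = m' := by
    intro m m' p h1 h2
    have := prod_inj p.1.2 p.2.2 (fun i => m i) (fun i => m' i) (h1.symm.trans h2)
    funext i
    exact Fin.ext (congrFun this i)
  let p₀ : V n := ⟨(1, d), by simpa [V] using hd⟩
  obtain ⟨m, hm⟩ := hcov p₀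
  have hall := const_of_closed Z hcl hcov hdis m p₀ hm
  have hF0 : F φ p₀ = φ (diagonal d) := by simp [F, p₀]
  have hsym : ∀ j, m j = m i := by
    intro j
    let σ := Equiv.swap i j
    let P : Matrix (Fin n) (Fin n) ℂ := (1 : Matrix (Fin n) (Fin n) ℂ).submatrix σ id
    have hP : P.det ≠ 0 := by
      simp only [P, Matrix.det_permute]
      simp
    have hPu : IsUnit P := (Matrix.isUnit_iff_isUnit_det _).2 (isUnit_iff_ne_zero.2 hP)
    have hPD : P * diagonal d * P⁻¹ = diagonal (d ∘ σ) := by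
      have : P * diagonal d = diagonal (d ∘ σ) * P := by
        ext a b
        simp only [P, Matrix.mul_diagonal, Matrix.diagonal_mul, Matrix.submatrix_apply, id,
          Matrix.one_apply]
        split_ifs with hab
        · simp [hab]
        · simp
      rw [this, Matrix.mul_assoc, mul_inv_self hPu, Matrix.mul_one]
    have h1 : (φ (diagonal (d ∘ σ))).charpoly = ∏ i, (X - C (d i)) ^ (m i : ℕ) := by
      have := hall ⟨(P, d), ⟨hP, hd⟩⟩
      simp only [Z, F] at this
      change (φ (P * diagonal d * P⁻¹)).charpoly = _ at this
      rwa [hPD] at this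
    have h2 : (φ (diagonal (d ∘ σ))).charpoly = ∏ i, (X - C (d (σ i))) ^ (m i : ℕ) := by
      have := hall ⟨(1, d ∘ σ), ⟨by simp, hd.comp σ.injective⟩⟩
      change (φ (1 * diagonal (d ∘ σ) * 1⁻¹)).charpoly = _ at this
      simpa using this
    have h3 : ∏ i, (X - C (d (σ i))) ^ (m i : ℕ) = ∏ i, (X - C (d i)) ^ (m (σ i) : ℕ) := by
      rw [← Equiv.prod_comp σ]
      simp [σ]
    have h4 := prod_inj d hd _ _ (h1.symm.trans (h2.trans h3))
    have h5 := congrFun h4 j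
    simp only [σ, Equiv.swap_apply_right] at h5
    exact Fin.ext h5
  have hm' : (φ (diagonal d)).charpoly = ∏ i, (X - C (d i)) ^ (m i : ℕ) := by
    rw [← hF0]; exact hm
  have hne : (m i : ℕ) ≠ 0 := by
    intro h0
    have h1 : (φ (diagonal d)).charpoly = 1 := by
      rw [hm']
      apply Finset.prod_eq_one
      intro j _
      rw [hsym j, h0, pow_zero]
    have h2 : (φ (diagonal d)).charpoly.natDegree = n := by simp
    rw [h1] at h2
    simp at h2
    have := i.2
    lia
  rw [hm', Polynomial.eval_prod]
  apply Finset.prod_eq_zero (Finset.mem_univ i)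
  simp [hne]

lemma diag_fixed (h : Good φ) (d₀ : Fin n → ℂ) (hd₀ : Function.Injective d₀)
    (h0 : φ (diagonal d₀) = diagonal d₀) (d : Fin n → ℂ) : φ (diagonal d) = diagonal d := by
  have hdiag : ∀ d, ∃ e, φ (diagonal d) = diagonal e := by
    intro d
    refine ⟨fun i => φ (diagonal d) i i, ?_⟩
    have hc := h.comm (diagonal d) (diagonal d₀) (by
      rw [Matrix.diagonal_mul_diagonal, Matrix.diagonal_mul_diagonal]; simp only [mul_comm])
    rw [h0] at hc
    ext i j
    by_cases hij : i = j
    · subst hij; simp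
    · rw [Matrix.diagonal_apply_ne _ hij]
      have := congrFun (congrFun hc i) j
      rw [Matrix.mul_diagonal, Matrix.diagonal_mul] at this
      have hne : d₀ j - d₀ i ≠ 0 := sub_ne_zero.2 (fun he => hij (hd₀ he).symm)
      have h2 : (d₀ j - d₀ i) * φ (diagonal d) i j = 0 := by linear_combination this
      exact (mul_eq_zero.1 h2).resolve_left hne
  have : PreconnectedSpace {d : Fin n → ℂ | Function.Injective d} :=
    isPreconnected_iff_preconnectedSpace.1 preconn_inj
  let Z : (Fin n → Fin n) → Set {d : Fin n → ℂ | Function.Injective d} := fun σ =>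
    {d | φ (diagonal d.1) = diagonal (d.1 ∘ σ)}
  have hcl : ∀ σ, IsClosed (Z σ) := by
    intro σ
    have := h.cont
    refine isClosed_eq (by fun_prop) ?_
    refine Continuous.matrix_diagonal ?_
    exact continuous_pi fun i => (continuous_apply (σ i)).comp continuous_subtype_val
  have hcov : ∀ d, ∃ σ, d ∈ Z σ := by
    intro d
    obtain ⟨e, he⟩ := hdiag d.1
    have hs := h.shrink (diagonal d.1)
    rw [he, spectrum_diag, spectrum_diag] at hs
    choose σ hσ using fun i => hs ⟨i, rfl⟩
    refine ⟨σ, ?_⟩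
    change φ (diagonal d.1) = diagonal (d.1 ∘ σ)
    rw [he]
    congr 1
    funext i
    exact (hσ i).symm
  have hdis : ∀ σ τ d, d ∈ Z σ → d ∈ Z τ → σ = τ := by
    intro σ τ d h1 h2
    have := Matrix.diagonal_injective (h1.symm.trans h2)
    funext i
    exact d.2 (congrFun this i)
  have hall := const_of_closed Z hcl hcov hdis id ⟨d₀, hd₀⟩ h0
  have hcont := h.cont
  have := Continuous.ext_on (dense_inj (n := n)) (f := fun d => φ (diagonal d))
    (g := fun d => diagonal d) (by fun_prop) (by fun_prop) (fun d hd => hall ⟨d, hd⟩)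
  exact congrFun this d

lemma key (h : Good φ) {S : Matrix (Fin n) (Fin n) ℂ} (hS : IsUnit S) :
    ∃ T : Matrix (Fin n) (Fin n) ℂ, IsUnit T ∧
      ∀ d, φ (S * diagonal d * S⁻¹) = T * diagonal d * T⁻¹ := by
  have h1 := h.conj hS isUnit_one
  obtain ⟨T, hT, hTd⟩ := diag_of_eig _ _ (exists_inj n) (full_spec h1 _ (exists_inj n))
  refine ⟨T, hT, ?_⟩
  have h2 := h.conj hS (isUnit_inv hT)
  have hTT : T⁻¹⁻¹ = T := Matrix.nonsing_inv_nonsing_inv _ ((Matrix.isUnit_iff_isUnit_det _).1 hT)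
  have cancel : ∀ Y Z, T⁻¹ * Y * T⁻¹⁻¹ = Z ↔ Y = T * Z * T⁻¹ := by
    intro Y Z
    rw [hTT]
    constructor
    · rintro rfl
      calc Y = (T * T⁻¹) * Y * (T * T⁻¹) := by rw [mul_inv_self hT]; simp
        _ = _ := by simp only [Matrix.mul_assoc]
    · rintro rfl
      calc _ = (T⁻¹ * T) * Z * (T⁻¹ * T) := by simp only [Matrix.mul_assoc]
        _ = _ := by rw [inv_mul_self hT]; simp
  have h3 := diag_fixed h2 _ (exists_inj n) (by
    rw [cancel]
    simpa using hTd)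
  intro d
  exact (cancel _ _).1 (h3 d)


end PMn

namespace PMn
variable {n : ℕ}
variable {φ : Matrix (Fin n) (Fin n) ℂ → Matrix (Fin n) (Fin n) ℂ}
/-- Conjugated diagonal embedding as a linear map. -/
noncomputable def diagConj (T : Matrix (Fin n) (Fin n) ℂ) :
    (Fin n → ℂ) →ₗ[ℂ] Matrix (Fin n) (Fin n) ℂ where
  toFun d := T * diagonal d * T⁻¹
  map_add' d e := by
    have : diagonal (d + e) = diagonal d + diagonal e := (Matrix.diagonal_add d e).symm
    rw [this, Matrix.mul_add, Matrix.add_mul]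
  map_smul' c d := by
    rw [Matrix.diagonal_smul, Matrix.mul_smul, Matrix.smul_mul]; rfl

lemma key' (h : Good φ) {S : Matrix (Fin n) (Fin n) ℂ} (hS : IsUnit S) :
    ∃ T : Matrix (Fin n) (Fin n) ℂ, IsUnit T ∧
      ∀ d, φ (diagConj S d) = diagConj T d := key h hS

lemma hom (h : Good φ) (c : ℂ) (X : Matrix (Fin n) (Fin n) ℂ) : φ (c • X) = c • φ X := by
  have hc := h.cont
  refine congrFun (Continuous.ext_on (dense_diag (n := n)) (f := fun X => φ (c • X))
    (g := fun X => c • φ X) (by fun_prop) (by fun_prop) ?_) X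
  rintro _ ⟨S, d, hS, rfl⟩
  obtain ⟨T, -, hT⟩ := key' h hS
  change φ (c • diagConj S d) = c • φ (diagConj S d)
  rw [← map_smul, hT, hT, map_smul]

lemma sq (h : Good φ) (X : Matrix (Fin n) (Fin n) ℂ) : φ (X * X) = φ X * φ X := by
  have hc := h.cont
  refine congrFun (Continuous.ext_on (dense_diag (n := n)) (f := fun X => φ (X * X))
    (g := fun X => φ X * φ X) (by fun_prop) (by fun_prop) ?_) X
  rintro _ ⟨S, d, hS, rfl⟩
  obtain ⟨T, hTu, hT⟩ := key h hS
  simp only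
  rw [conj_mul hS, Matrix.diagonal_mul_diagonal, hT, hT, conj_mul hTu,
    Matrix.diagonal_mul_diagonal]

lemma Good.conj' (h : Good φ) {S : Matrix (Fin n) (Fin n) ℂ} (hS : IsUnit S) :
    Good (fun X => φ (S * X * S⁻¹)) := by
  simpa using h.conj hS isUnit_one

lemma zero (h : Good φ) : φ 0 = 0 := by
  have := hom h 0 0
  simpa using this

/-- Basis vectors. -/
noncomputable abbrev e (i : Fin n) : Fin n → ℂ := Pi.single i 1

lemma shear_unit (i₀ : Fin n) (w : Fin n → ℂ) (hw : w i₀ = 0) :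
    IsUnit (1 + vecMulVec w (e i₀)) := by
  apply IsUnit.of_mul_eq_one (1 - vecMulVec w (e i₀))
  have : vecMulVec w (e i₀) * vecMulVec w (e i₀) = 0 := by
    rw [Matrix.vecMulVec_mul_vecMulVec]; simp [hw]
  rw [Matrix.mul_sub, Matrix.add_mul, Matrix.add_mul, this]
  simp

lemma shear_conj (i₀ : Fin n) (w : Fin n → ℂ) (hw : w i₀ = 0) (d : Fin n → ℂ) :
    diagConj (1 + vecMulVec w (e i₀)) d =
      diagonal d + vecMulVec (d i₀ • w - d * w) (e i₀) := by
  have hu := shear_unit i₀ w hw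
  have h1 : (1 + vecMulVec w (e i₀)) * diagonal d =
      (diagonal d + vecMulVec (d i₀ • w - d * w) (e i₀)) * (1 + vecMulVec w (e i₀)) := by
    have h2 : vecMulVec (d i₀ • w - d * w) (e i₀) * vecMulVec w (e i₀) = 0 := by
      rw [Matrix.vecMulVec_mul_vecMulVec]; simp [hw]
    rw [Matrix.mul_add, Matrix.add_mul, Matrix.add_mul, Matrix.add_mul, h2]
    ext i j
    simp only [Matrix.add_apply, Matrix.one_mul, Matrix.mul_one, Matrix.mul_diagonal,
      Matrix.diagonal_mul, Matrix.vecMulVec_apply, Pi.sub_apply, Pi.smul_apply, Pi.mul_apply,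
      smul_eq_mul, Matrix.zero_apply, e, Pi.single_apply]
    split_ifs with hj
    · subst hj; ring
    · ring
  change (1 + vecMulVec w (e i₀)) * diagonal d * (1 + vecMulVec w (e i₀))⁻¹ = _
  rw [h1, Matrix.mul_assoc, mul_inv_self hu, Matrix.mul_one]

lemma base_ts (h : Good φ) {i₀ i₁ i₂ : Fin n} (h01 : i₀ ≠ i₁) (h02 : i₀ ≠ i₂) (h12 : i₁ ≠ i₂)
    (t s : ℂ) :
    φ (vecMulVec (e i₀ + t • e i₁ + s • e i₂) (e i₀)) +
      φ (diagonal (e i₁) + vecMulVec (-(t • e i₁)) (e i₀)) +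
      φ (diagonal (1 - e i₀ - e i₁) + vecMulVec (-(s • e i₂)) (e i₀)) = φ (diagonal 1) := by
  have hw : (t • e i₁ + s • e i₂) i₀ = 0 := by simp [h01, h02]
  obtain ⟨T, -, hT⟩ := key' h (shear_unit i₀ _ hw)
  have h1 := hT (e i₀)
  have h2 := hT (e i₁)
  have h3 := hT (1 - e i₀ - e i₁)
  have h4 := hT 1
  rw [shear_conj _ _ hw] at h1 h2 h3 h4
  have e1 : diagonal (e i₀) + vecMulVec (e i₀ i₀ • (t • e i₁ + s • e i₂) -
      e i₀ * (t • e i₁ + s • e i₂)) (e i₀) = vecMulVec (e i₀ + t • e i₁ + s • e i₂) (e i₀) := by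
    ext i j
    simp only [Matrix.add_apply, Matrix.diagonal_apply, Matrix.vecMulVec_apply, Pi.sub_apply,
      Pi.smul_apply, Pi.mul_apply, Pi.add_apply, smul_eq_mul, e, Pi.single_apply]
    by_cases hi : i = i₀ <;> by_cases hj : j = i₀ <;> by_cases hij : i = j <;> simp_all
  have e2 : e i₁ i₀ • (t • e i₁ + s • e i₂) - e i₁ * (t • e i₁ + s • e i₂) = -(t • e i₁) := by
    ext i
    simp only [Pi.sub_apply, Pi.neg_apply,
      Pi.smul_apply, Pi.mul_apply, Pi.add_apply, smul_eq_mul, e, Pi.single_apply]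
    by_cases hi : i = i₁ <;> simp_all
  have e3 : (1 - e i₀ - e i₁) i₀ • (t • e i₁ + s • e i₂) -
      (1 - e i₀ - e i₁) * (t • e i₁ + s • e i₂) = -(s • e i₂) := by
    ext i
    simp only [Pi.sub_apply, Pi.neg_apply, Pi.one_apply,
      Pi.smul_apply, Pi.mul_apply, Pi.add_apply, smul_eq_mul, e, Pi.single_apply]
    by_cases hi : i = i₁
    · have := h01.symm
      simp_all
    · by_cases hi : i = i₂
      · have := h02.symm
        have := h12.symm
        simp_all
      · simp_all
  have e4 : (1 : Fin n → ℂ) i₀ • (t • e i₁ + s • e i₂) - 1 * (t • e i₁ + s • e i₂) = 0 := by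
    simp
  rw [e1] at h1
  rw [e2] at h2
  rw [e3] at h3
  rw [e4, Matrix.zero_vecMulVec, add_zero] at h4
  rw [h1, h2, h3, h4, ← map_add, ← map_add]
  congr 1
  ring

lemma base (h : Good φ) {i₀ i₁ i₂ : Fin n} (h01 : i₀ ≠ i₁) (h02 : i₀ ≠ i₂) (h12 : i₁ ≠ i₂) :
    φ (vecMulVec (e i₀ + e i₁ + e i₂) (e i₀)) + φ (vecMulVec (e i₀) (e i₀)) =
      φ (vecMulVec (e i₀ + e i₁) (e i₀)) + φ (vecMulVec (e i₀ + e i₂) (e i₀)) := by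
  have h1 := base_ts h h01 h02 h12 1 1
  have h2 := base_ts h h01 h02 h12 0 0
  have h3 := base_ts h h01 h02 h12 1 0
  have h4 := base_ts h h01 h02 h12 0 1
  simp only [one_smul, zero_smul, add_zero] at h1 h2 h3 h4
  rw [← sub_eq_zero]
  have : φ (vecMulVec (e i₀ + e i₁ + e i₂) (e i₀)) + φ (vecMulVec (e i₀) (e i₀)) -
      (φ (vecMulVec (e i₀ + e i₁) (e i₀)) + φ (vecMulVec (e i₀ + e i₂) (e i₀))) =
      φ (diagonal 1) + φ (diagonal 1) - (φ (diagonal 1) + φ (diagonal 1)) := by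
    nth_rewrite 1 [← h1]
    nth_rewrite 1 [← h2]
    nth_rewrite 1 [← h3]
    rw [← h4]
    abel
  rw [this]; abel

lemma dense_shift (A : Matrix (Fin n) (Fin n) ℂ) : Dense {c : ℂ | IsUnit (A + c • 1)} := by
  have hfin : {c : ℂ | (-A).charpoly.eval c = 0}.Finite := by
    refine ((-A).charpoly.roots.toFinset.finite_toSet).subset ?_
    intro c hc
    simp only [Finset.mem_coe, Multiset.mem_toFinset]
    rw [Polynomial.mem_roots (Matrix.charpoly_monic _).ne_zero]
    exact hc
  have hd := hfin.countable.dense_compl ℂ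
  refine hd.mono ?_
  intro c hc
  change IsUnit (A + c • 1)
  rw [Matrix.isUnit_iff_isUnit_det, isUnit_iff_ne_zero]
  intro h0
  apply hc
  change (-A).charpoly.eval c = 0
  rw [Matrix.eval_charpoly, ← h0]
  congr 1
  rw [sub_neg_eq_add, add_comm]
  congr 1
  ext i j
  simp [Matrix.diagonal_apply, Matrix.one_apply]

lemma step (h : Good φ) {i₀ i₁ i₂ : Fin n} (h01 : i₀ ≠ i₁) (h02 : i₀ ≠ i₂) (h12 : i₁ ≠ i₂)
    (y p q : Fin n → ℂ) (hp : p i₀ = 0) (hq : q i₀ = 0) :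
    φ (vecMulVec (y + p + q) (e i₀)) + φ (vecMulVec y (e i₀)) =
      φ (vecMulVec (y + p) (e i₀)) + φ (vecMulVec (y + q) (e i₀)) := by
  let A : Matrix (Fin n) (Fin n) ℂ :=
    Matrix.of fun i j => if j = i₀ then y i else if j = i₁ then p i else if j = i₂ then q i else 0
  have hc := h.cont
  have key : ∀ c : ℂ, IsUnit (A + c • 1) →
      φ (vecMulVec ((y + c • e i₀) + (p + c • e i₁) + (q + c • e i₂)) (e i₀)) +
        φ (vecMulVec (y + c • e i₀) (e i₀)) =
      φ (vecMulVec ((y + c • e i₀) + (p + c • e i₁)) (e i₀)) +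
        φ (vecMulVec ((y + c • e i₀) + (q + c • e i₂)) (e i₀)) := by
    intro c hu
    set S := A + c • (1 : Matrix (Fin n) (Fin n) ℂ) with hS
    have hS0 : S *ᵥ (e i₀) = y + c • e i₀ := by
      ext i
      simp [hS, A, Matrix.one_apply, Pi.single_apply]
    have hS1 : S *ᵥ (e i₁) = p + c • e i₁ := by
      ext i
      simp [hS, A, Matrix.one_apply, Pi.single_apply, h01.symm]
    have hS2 : S *ᵥ (e i₂) = q + c • e i₂ := by
      ext i
      simp [hS, A, Matrix.one_apply, Pi.single_apply, h02.symm, h12.symm]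
    have hrow : (e i₀) ᵥ* S = (y i₀ + c) • e i₀ := by
      ext j
      by_cases hj : j = i₀
      · subst hj; simp [hS, A]
      · simp [hS, A, hj, hp, hq, Ne.symm hj]
    have hv : y i₀ + c ≠ 0 := by
      intro h0
      rw [h0, zero_smul] at hrow
      have h1 : (e i₀) ᵥ* S ᵥ* S⁻¹ = 0 := by rw [hrow]; simp
      rw [Matrix.vecMul_vecMul, mul_inv_self hu, Matrix.vecMul_one] at h1
      have := congrFun h1 i₀
      simp at this
    have hinv : (e i₀) ᵥ* S⁻¹ = (y i₀ + c)⁻¹ • e i₀ := by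
      have h1 : (e i₀) ᵥ* S ᵥ* S⁻¹ = (y i₀ + c) • ((e i₀) ᵥ* S⁻¹) := by
        rw [hrow, Matrix.smul_vecMul]
      rw [Matrix.vecMul_vecMul, mul_inv_self hu, Matrix.vecMul_one] at h1
      conv_rhs => rw [h1, smul_smul, inv_mul_cancel₀ hv, one_smul]
    have hconj : ∀ w, φ (vecMulVec (S *ᵥ w) (e i₀)) =
        (y i₀ + c) • φ (S * vecMulVec w (e i₀) * S⁻¹) := by
      intro w
      rw [← hom h, Matrix.mul_vecMulVec, Matrix.vecMulVec_mul, hinv, Matrix.vecMulVec_smul,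
        smul_smul, mul_inv_cancel₀ hv, one_smul]
    have hb := base (h.conj' hu) h01 h02 h12
    rw [← hS0, ← hS1, ← hS2, ← Matrix.mulVec_add, ← Matrix.mulVec_add, ← Matrix.mulVec_add,
      hconj, hconj, hconj, hconj, ← smul_add, ← smul_add, hb]
  have := Continuous.ext_on (dense_shift A)
    (f := fun c : ℂ => φ (vecMulVec ((y + c • e i₀) + (p + c • e i₁) + (q + c • e i₂)) (e i₀)) +
        φ (vecMulVec (y + c • e i₀) (e i₀)))
    (g := fun c : ℂ => φ (vecMulVec ((y + c • e i₀) + (p + c • e i₁)) (e i₀)) +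
        φ (vecMulVec ((y + c • e i₀) + (q + c • e i₂)) (e i₀)))
    (by fun_prop) (by fun_prop) key
  simpa using congrFun this 0

lemma ker_add (h : Good φ) {i₀ i₁ i₂ : Fin n} (h01 : i₀ ≠ i₁) (h02 : i₀ ≠ i₂) (h12 : i₁ ≠ i₂)
    (y p : Fin n → ℂ) (hp : p i₀ = 0) :
    φ (vecMulVec (y + p) (e i₀)) = φ (vecMulVec y (e i₀)) + φ (vecMulVec p (e i₀)) := by
  have hc := h.cont
  let L : (Fin n → ℂ) → Matrix (Fin n) (Fin n) ℂ := fun y => φ (vecMulVec y (e i₀))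
  have hL : ∀ (c : ℂ) y, L (c • y) = c • L y := by
    intro c y
    simp only [L, Matrix.smul_vecMulVec, hom h]
  let H : ℂ → Matrix (Fin n) (Fin n) ℂ := fun c => L (c • y + p) - L (c • y)
  have hH : ∀ c, H (c / 2) = H c := by
    intro c
    have h1 := step h h01 h02 h12 (c • y) p p hp hp
    change L (c • y + p + p) + L (c • y) = L (c • y + p) + L (c • y + p) at h1
    have h2 : c • y + p + p = (2 : ℂ) • ((c / 2) • y + p) := by
      rw [smul_add, smul_smul, mul_div_cancel₀ c (two_ne_zero), two_smul, add_assoc]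
    have h3 : c • y = (2 : ℂ) • ((c / 2) • y) := by
      rw [smul_smul, mul_div_cancel₀ c (two_ne_zero)]
    have h4 : L (c • y) = (2 : ℂ) • L ((c / 2) • y) := by rw [← hL, ← h3]
    rw [h2, hL] at h1
    have h5 : (2 : ℂ) • H (c / 2) = (2 : ℂ) • H c := by
      simp only [H, smul_sub]
      rw [← h4, two_smul ℂ (L (c • y + p)), ← h1, two_smul ℂ (L (c • y))]
      abel
    exact smul_right_injective _ (two_ne_zero) h5
  have hH2 : ∀ k : ℕ, H ((1 / 2 : ℂ) ^ k) = H 1 := by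
    intro k
    induction k with
    | zero => simp
    | succ k ih =>
      rw [← ih, ← hH ((1 / 2) ^ k)]
      congr 1
      ring
  have hHc : Continuous H := by
    simp only [H, L]
    fun_prop
  have ht : Filter.Tendsto (fun k : ℕ => (1 / 2 : ℂ) ^ k) Filter.atTop (nhds 0) :=
    tendsto_pow_atTop_nhds_zero_of_norm_lt_one (by norm_num)
  have h1 := (hHc.tendsto 0).comp ht
  have h2 : Filter.Tendsto (H ∘ fun k : ℕ => (1 / 2 : ℂ) ^ k) Filter.atTop (nhds (H 1)) := by
    have : (H ∘ fun k : ℕ => (1 / 2 : ℂ) ^ k) = fun _ => H 1 := funext hH2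
    rw [this]
    exact tendsto_const_nhds
  have h3 := tendsto_nhds_unique h1 h2
  simp only [H, zero_smul, zero_add, one_smul] at h3
  have h4 : L 0 = 0 := by simp [L, zero h]
  rw [h4, sub_zero] at h3
  change L (y + p) = L y + L p
  rw [h3]
  abel

lemma add_e (h : Good φ) {i₀ i₁ i₂ : Fin n} (h01 : i₀ ≠ i₁) (h02 : i₀ ≠ i₂) (h12 : i₁ ≠ i₂)
    (y z : Fin n → ℂ) :
    φ (vecMulVec (y + z) (e i₀)) = φ (vecMulVec y (e i₀)) + φ (vecMulVec z (e i₀)) := by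
  by_cases hy : y i₀ = 0
  · rw [add_comm y z, ker_add h h01 h02 h12 z y hy, add_comm]
  · let c := z i₀ / y i₀
    let p := z - c • y
    have hp : p i₀ = 0 := by simp [p, c, hy]
    have hz : z = c • y + p := by simp [p]
    have h1 : y + z = (1 + c) • y + p := by rw [hz, add_smul, one_smul, add_assoc]
    rw [h1, ker_add h h01 h02 h12 _ p hp]
    conv_rhs => rw [hz, ker_add h h01 h02 h12 _ p hp]
    rw [Matrix.smul_vecMulVec, hom h, Matrix.smul_vecMulVec, hom h, add_smul, one_smul, add_assoc]

lemma add_left (h : Good φ) (hn : 3 ≤ n) (f y z : Fin n → ℂ) :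
    φ (vecMulVec (y + z) f) = φ (vecMulVec y f) + φ (vecMulVec z f) := by
  have hc := h.cont
  let i₀ : Fin n := ⟨0, by lia⟩
  let i₁ : Fin n := ⟨1, by lia⟩
  let i₂ : Fin n := ⟨2, by lia⟩
  have h01 : i₀ ≠ i₁ := by simp [i₀, i₁]
  have h02 : i₀ ≠ i₂ := by simp [i₀, i₂]
  have h12 : i₁ ≠ i₂ := by simp [i₁, i₂]
  let A : Matrix (Fin n) (Fin n) ℂ := vecMulVec (e i₀) f
  have key : ∀ c : ℂ, IsUnit (A + c • 1) →
      φ (vecMulVec (y + z) (f + c • e i₀)) =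
        φ (vecMulVec y (f + c • e i₀)) + φ (vecMulVec z (f + c • e i₀)) := by
    intro c hu
    set R := A + c • (1 : Matrix (Fin n) (Fin n) ℂ) with hR
    have hrow : (e i₀) ᵥ* R = f + c • e i₀ := by
      ext j
      simp [hR, A, Matrix.one_apply, Pi.single_apply, Matrix.vecMulVec_apply, eq_comm]
    have hRR : R⁻¹⁻¹ = R :=
      Matrix.nonsing_inv_nonsing_inv _ ((Matrix.isUnit_iff_isUnit_det _).1 hu)
    have hconj : ∀ w, R⁻¹ * vecMulVec (R *ᵥ w) (e i₀) * R⁻¹⁻¹ = vecMulVec w (f + c • e i₀) := by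
      intro w
      rw [hRR, Matrix.mul_vecMulVec, Matrix.vecMulVec_mul, hrow, Matrix.mulVec_mulVec,
        inv_mul_self hu, Matrix.one_mulVec]
    have hb := add_e (h.conj' (isUnit_inv hu)) h01 h02 h12 (R *ᵥ y) (R *ᵥ z)
    rw [← Matrix.mulVec_add] at hb
    simpa only [hconj] using hb
  have := Continuous.ext_on (dense_shift A)
    (f := fun c : ℂ => φ (vecMulVec (y + z) (f + c • e i₀)))
    (g := fun c : ℂ => φ (vecMulVec y (f + c • e i₀)) + φ (vecMulVec z (f + c • e i₀)))
    (by fun_prop) (by fun_prop) key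
  simpa using congrFun this 0

lemma Good.transpose (h : Good φ) : Good (fun X => φ Xᵀ) where
  cont := by
    have := h.cont
    fun_prop
  comm X Y hXY := by
    apply h.comm
    rw [← Matrix.transpose_mul, ← Matrix.transpose_mul, hXY]
  shrink X := by
    refine (h.shrink _).trans ?_
    intro z
    rw [Matrix.mem_spectrum_iff_isRoot_charpoly, Matrix.mem_spectrum_iff_isRoot_charpoly,
      Matrix.charpoly_transpose]
    exact id

lemma add_right (h : Good φ) (hn : 3 ≤ n) (y f g : Fin n → ℂ) :
    φ (vecMulVec y (f + g)) = φ (vecMulVec y f) + φ (vecMulVec y g) := by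
  have := add_left h.transpose hn y f g
  simpa only [Matrix.transpose_vecMulVec] using this

/-- The linear extension from matrix units. -/
noncomputable def Lin (φ : Matrix (Fin n) (Fin n) ℂ → Matrix (Fin n) (Fin n) ℂ) :
    Matrix (Fin n) (Fin n) ℂ →ₗ[ℂ] Matrix (Fin n) (Fin n) ℂ :=
  ∑ i, ∑ j, (Matrix.entryLinearMap ℂ ℂ i j).smulRight (φ (vecMulVec (e i) (e j)))

lemma Lin_apply (X : Matrix (Fin n) (Fin n) ℂ) :
    Lin φ X = ∑ i, ∑ j, X i j • φ (vecMulVec (e i) (e j)) := by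
  simp [Lin]

lemma lin_expand (f : (Fin n → ℂ) →ₗ[ℂ] Matrix (Fin n) (Fin n) ℂ) (x : Fin n → ℂ) :
    f x = ∑ i, x i • f (e i) := by
  conv_lhs => rw [pi_eq_sum_univ' x]
  rw [map_sum]
  simp_rw [map_smul]
  
lemma rank_one (h : Good φ) (hn : 3 ≤ n) (x f : Fin n → ℂ) :
    φ (vecMulVec x f) = Lin φ (vecMulVec x f) := by
  let Lf : (Fin n → ℂ) →ₗ[ℂ] Matrix (Fin n) (Fin n) ℂ :=
    { toFun := fun y => φ (vecMulVec y f)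
      map_add' := add_left h hn f
      map_smul' := fun c y => by simp [Matrix.smul_vecMulVec, hom h] }
  let Ry : (Fin n → ℂ) → (Fin n → ℂ) →ₗ[ℂ] Matrix (Fin n) (Fin n) ℂ := fun y =>
    { toFun := fun g => φ (vecMulVec y g)
      map_add' := add_right h hn y
      map_smul' := fun c g => by simp [Matrix.vecMulVec_smul, hom h] }
  have h1 : φ (vecMulVec x f) = ∑ i, x i • φ (vecMulVec (e i) f) := lin_expand Lf x
  have h2 : ∀ i, φ (vecMulVec (e i) f) = ∑ j, f j • φ (vecMulVec (e i) (e j)) :=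
    fun i => lin_expand (Ry (e i)) f
  rw [h1, Lin_apply]
  simp_rw [h2, Finset.smul_sum, smul_smul]
  rfl

lemma eq_Lin (h : Good φ) (hn : 3 ≤ n) (X : Matrix (Fin n) (Fin n) ℂ) : φ X = Lin φ X := by
  have hc := h.cont
  have hLc : Continuous (Lin φ) := by
    have : ⇑(Lin φ) = fun X => ∑ i, ∑ j, X i j • φ (vecMulVec (e i) (e j)) := funext Lin_apply
    rw [this]
    fun_prop
  refine congrFun (Continuous.ext_on (dense_diag (n := n)) hc hLc ?_) X
  rintro _ ⟨S, d, hS, rfl⟩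
  obtain ⟨T, -, hT⟩ := key' h hS
  change φ (diagConj S d) = Lin φ (diagConj S d)
  have h1 : ∀ i, diagConj S (e i) = vecMulVec (S *ᵥ e i) (e i ᵥ* S⁻¹) := by
    intro i
    rw [← Matrix.vecMulVec_mul, ← Matrix.mul_vecMulVec]
    change S * diagonal (e i) * S⁻¹ = _
    congr 2
    ext a b
    simp only [Matrix.diagonal_apply, Matrix.vecMulVec_apply, e, Pi.single_apply]
    by_cases ha : a = i <;> by_cases hb : b = i <;> by_cases hab : a = b <;> simp_all
  rw [hT, lin_expand (diagConj T) d, lin_expand (diagConj S) d, map_sum]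
  refine Finset.sum_congr rfl fun i _ => ?_
  rw [map_smul, ← hT, h1, rank_one h hn]


end PMn

namespace PMn
variable {n : ℕ}
variable {φ : Matrix (Fin n) (Fin n) ℂ → Matrix (Fin n) (Fin n) ℂ}
/-- Linear, square-preserving, fixing the diagonal matrices. -/
structure Jord (Φ : Matrix (Fin n) (Fin n) ℂ →ₗ[ℂ] Matrix (Fin n) (Fin n) ℂ) : Prop where
  sq : ∀ X, Φ (X * X) = Φ X * Φ X
  diag : ∀ d, Φ (diagonal d) = diagonal d

variable {Φ : Matrix (Fin n) (Fin n) ℂ →ₗ[ℂ] Matrix (Fin n) (Fin n) ℂ}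

lemma Jord.jordan (h : Jord Φ) (X Y : Matrix (Fin n) (Fin n) ℂ) :
    Φ (X * Y + Y * X) = Φ X * Φ Y + Φ Y * Φ X := by
  have h1 := h.sq (X + Y)
  have h2 : (X + Y) * (X + Y) = X * X + Y * Y + (X * Y + Y * X) := by
    rw [Matrix.add_mul, Matrix.mul_add, Matrix.mul_add]; abel
  have h3 : Φ (X + Y) = Φ X + Φ Y := map_add ..
  rw [h2, map_add, map_add Φ (X * X) (Y * Y), h.sq, h.sq, h3, Matrix.add_mul, Matrix.mul_add,
    Matrix.mul_add] at h1
  rw [← sub_eq_zero] at h1 ⊢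
  rw [← h1]
  abel

/-- Matrix units. -/
noncomputable abbrev E (i j : Fin n) : Matrix (Fin n) (Fin n) ℂ := Matrix.single i j 1

lemma Jord.E_self (h : Jord Φ) (i : Fin n) : Φ (E i i) = E i i := by
  have : E i i = diagonal (Pi.single i 1) := by
    rw [Matrix.diagonal_single]
  rw [this, h.diag]

lemma Jord.form (h : Jord Φ) {i j : Fin n} (hij : i ≠ j) :
    Φ (E i j) = Matrix.single i j (Φ (E i j) i j) + Matrix.single j i (Φ (E i j) j i) := by
  have h1 := h.jordan (E i i) (E i j)
  have h2 := h.jordan (E j j) (E i j)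
  rw [h.E_self] at h1 h2
  have e1 : E i i * E i j + E i j * E i i = E i j := by
    simp [E, hij, hij.symm]
  have e2 : E j j * E i j + E i j * E j j = E i j := by
    simp [E, hij, hij.symm]
  rw [e1] at h1
  rw [e2] at h2
  have key : ∀ k, Φ (E i j) = E k k * Φ (E i j) + Φ (E i j) * E k k → ∀ a b,
      Φ (E i j) a b = ((if a = k then 1 else 0) + (if b = k then 1 else 0)) * Φ (E i j) a b := by
    intro k hk a b
    have hd : E k k = diagonal (Pi.single k 1) := by rw [Matrix.diagonal_single]
    rw [hd] at hk
    have := congrFun (congrFun hk a) b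
    rw [Matrix.add_apply, Matrix.diagonal_mul, Matrix.mul_diagonal, Pi.single_apply,
      Pi.single_apply] at this
    linear_combination this
  have k1 := key i h1
  have k2 := key j h2
  ext a b
  have k1 := k1 a b
  have k2 := k2 a b
  simp only [Matrix.add_apply, Matrix.single_apply]
  by_cases c1 : a = i ∧ b = j
  · obtain ⟨rfl, rfl⟩ := c1
    simp [hij]
  by_cases c2 : a = j ∧ b = i
  · obtain ⟨rfl, rfl⟩ := c2
    simp [hij]
  rw [if_neg (fun h => c1 ⟨h.1.symm, h.2.symm⟩), if_neg (fun h => c2 ⟨h.1.symm, h.2.symm⟩), add_zero]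
  generalize Φ (E i j) a b = x at k1 k2
  split_ifs at k1 k2 <;> first
    | exact absurd ⟨by assumption, by assumption⟩ c1
    | exact absurd ⟨by assumption, by assumption⟩ c2
    | linear_combination k1
    | linear_combination k2
    | linear_combination -k1
    | linear_combination -k2
    | (subst_vars; exact absurd rfl hij)

lemma Jord.r2 (h : Jord Φ) {i j : Fin n} (hij : i ≠ j) :
    Φ (E i j) i j * Φ (E i j) j i = 0 := by
  have h1 := h.sq (E i j)
  have h0 : E i j * E i j = 0 := by simp [E, hij.symm]
  rw [h0, map_zero, h.form hij] at h1
  have := congrFun (congrFun h1 i) i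
  simpa [Matrix.add_mul, Matrix.mul_add, hij, hij.symm] using this.symm

lemma Jord.r3 (h : Jord Φ) {i j : Fin n} (hij : i ≠ j) :
    Φ (E i j) i j * Φ (E j i) j i + Φ (E i j) j i * Φ (E j i) i j = 1 := by
  have h1 := h.jordan (E i j) (E j i)
  have h0 : E i j * E j i + E j i * E i j = E i i + E j j := by simp [E]
  rw [h0, map_add, h.E_self, h.E_self, h.form hij, h.form hij.symm] at h1
  have := congrFun (congrFun h1 i) i
  simp [Matrix.add_mul, Matrix.mul_add, hij, hij.symm, E] at this
  linear_combination -this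

lemma Jord.r4 (h : Jord Φ) {i j k : Fin n} (hij : i ≠ j) (hjk : j ≠ k) (hik : i ≠ k) :
    Φ (E i j) i j * Φ (E j k) j k = Φ (E i k) i k ∧
    Φ (E i j) j i * Φ (E j k) k j = Φ (E i k) k i := by
  have h1 := h.jordan (E i j) (E j k)
  have h0 : E i j * E j k + E j k * E i j = E i k := by simp [E, hik.symm]
  rw [h0, h.form hij, h.form hjk, h.form hik] at h1
  have a := congrFun (congrFun h1 i) k
  have b := congrFun (congrFun h1 k) i
  simp [Matrix.add_mul, Matrix.mul_add, hij, hij.symm, hjk, hjk.symm, hik, hik.symm] at a b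
  constructor
  · linear_combination -a
  · linear_combination -b

lemma Jord.typeA (h : Jord Φ) (i₀ : Fin n) (hb : ∀ i j, i ≠ j → Φ (E i j) j i = 0) :
    ∃ T : Matrix (Fin n) (Fin n) ℂ, IsUnit T ∧ ∀ X, Φ X = T * X * T⁻¹ := by
  let a : Fin n → Fin n → ℂ := fun i j => Φ (E i j) i j
  have haii : ∀ i, a i i = 1 := by intro i; simp [a, h.E_self, E]
  have hM : ∀ i j, Φ (E i j) = Matrix.single i j (a i j) := by
    intro i j
    by_cases hij : i = j
    · subst hij; rw [haii, h.E_self]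
    · rw [h.form hij, hb i j hij]; simp [a]
  have hmul : ∀ i j k, a i j * a j k = a i k := by
    intro i j k
    by_cases hij : i = j
    · subst hij; rw [haii, one_mul]
    by_cases hjk : j = k
    · subst hjk; rw [haii, mul_one]
    by_cases hik : i = k
    · subst hik
      have := h.r3 hij
      rw [hb i j hij, zero_mul, add_zero] at this
      rw [haii]; exact this
    · exact (h.r4 hij hjk hik).1
  let T : Matrix (Fin n) (Fin n) ℂ := diagonal fun i => a i i₀
  let T' : Matrix (Fin n) (Fin n) ℂ := diagonal fun i => a i₀ i
  have hTT : T * T' = 1 := by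
    simp only [T, T', Matrix.diagonal_mul_diagonal, hmul, haii, Matrix.diagonal_one]
  refine ⟨T, IsUnit.of_mul_eq_one _ hTT, ?_⟩
  intro X
  rw [Matrix.inv_eq_right_inv hTT]
  have h1 : Φ X = ∑ i, ∑ j, X i j • Matrix.single i j (a i j) := by
    conv_lhs => rw [Matrix.matrix_eq_sum_single X]
    simp only [map_sum]
    refine Finset.sum_congr rfl fun i _ => Finset.sum_congr rfl fun j _ => ?_
    rw [← hM, ← map_smul]
    simp [E, Matrix.smul_single]
  have h2 : T * X * T' = Matrix.of fun i j => X i j * a i j := by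
    ext i j
    simp only [T, T', Matrix.mul_diagonal, Matrix.diagonal_mul, Matrix.of_apply]
    rw [← hmul i i₀ j]; ring
  rw [h1, h2]
  conv_rhs => rw [Matrix.matrix_eq_sum_single (Matrix.of fun i j => X i j * a i j)]
  simp [Matrix.smul_single]

/-- Transposed map. -/
noncomputable def trans (Φ : Matrix (Fin n) (Fin n) ℂ →ₗ[ℂ] Matrix (Fin n) (Fin n) ℂ) :
    Matrix (Fin n) (Fin n) ℂ →ₗ[ℂ] Matrix (Fin n) (Fin n) ℂ where
  toFun X := (Φ X)ᵀ
  map_add' X Y := by simp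
  map_smul' c X := by simp

lemma Jord.trans (h : Jord Φ) : Jord (PMn.trans Φ) where
  sq X := by
    change (Φ (X * X))ᵀ = (Φ X)ᵀ * (Φ X)ᵀ
    rw [h.sq, Matrix.transpose_mul]
  diag d := by
    change (Φ (diagonal d))ᵀ = _
    rw [h.diag, Matrix.diagonal_transpose]

lemma Jord.dichotomy (h : Jord Φ) :
    (∀ i j, i ≠ j → Φ (E i j) j i = 0) ∨ (∀ i j, i ≠ j → Φ (E i j) i j = 0) := by
  by_contra! hcon
  obtain ⟨⟨p, q, hpq, hpq'⟩, i, j, hij, hne⟩ := hcon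
  have toB : ∀ {i j}, i ≠ j → Φ (E i j) i j ≠ 0 → Φ (E i j) j i = 0 :=
    fun hij hne => (mul_eq_zero.1 (h.r2 hij)).resolve_left hne
  have toA : ∀ {i j}, i ≠ j → Φ (E i j) j i = 0 → Φ (E i j) i j ≠ 0 := by
    intro i j hij h0 h1
    have := h.r3 hij
    rw [h0, h1] at this
    simp at this
  have sw : ∀ {i j}, i ≠ j → Φ (E i j) i j ≠ 0 → Φ (E j i) j i ≠ 0 := by
    intro i j hij hne h1
    have := h.r3 hij
    rw [toB hij hne, h1] at this
    simp at this
  have right : ∀ {i j l}, i ≠ j → i ≠ l → Φ (E i j) i j ≠ 0 → Φ (E i l) i l ≠ 0 := by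
    intro i j l hij hil hne
    by_cases hjl : j = l
    · subst hjl; exact hne
    · apply toA hil
      rw [← (h.r4 hij hjl hil).2, toB hij hne, zero_mul]
  have left : ∀ {i j k}, i ≠ j → k ≠ j → Φ (E i j) i j ≠ 0 → Φ (E k j) k j ≠ 0 := by
    intro i j k hij hkj hne
    exact sw hkj.symm (right hij.symm hkj.symm (sw hij hne))
  have all : ∀ k l, k ≠ l → Φ (E k l) k l ≠ 0 := by
    intro k l hkl
    by_cases hl : l = i
    · subst hl
      exact left hij.symm hkl (sw hij hne)
    · exact left (Ne.symm hl) hkl (right hij (Ne.symm hl) hne)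
  exact hpq' (toB hpq (all p q hpq))

lemma Jord.final (h : Jord Φ) (i₀ : Fin n) :
    ∃ T : Matrix (Fin n) (Fin n) ℂ, IsUnit T ∧
      ((∀ X, Φ X = T * X * T⁻¹) ∨ (∀ X, Φ X = T * X.transpose * T⁻¹)) := by
  rcases h.dichotomy with hb | ha
  · obtain ⟨T, hT, hX⟩ := h.typeA i₀ hb
    exact ⟨T, hT, Or.inl hX⟩
  · obtain ⟨T, hT, hX⟩ := h.trans.typeA i₀ (fun i j hij => ha i j hij)
    refine ⟨(T⁻¹)ᵀ, ?_, Or.inr ?_⟩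
    · exact (Matrix.isUnit_transpose _).2 (isUnit_inv hT)
    · intro X
      have h1 : (Φ X)ᵀ = T * X * T⁻¹ := hX X
      have h2 : Φ X = (T * X * T⁻¹)ᵀ := by rw [← h1, Matrix.transpose_transpose]
      rw [h2, Matrix.transpose_mul, Matrix.transpose_mul, ← Matrix.transpose_nonsing_inv,
        Matrix.nonsing_inv_nonsing_inv _ ((Matrix.isUnit_iff_isUnit_det _).1 hT), Matrix.mul_assoc]

end PMn

/-- (Strengthened Šemrl theorem.) For `n ≥ 3`, any continuous,
commutativity-preserving and spectrum-shrinking map `φ : M_n → M_n` is of the form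
`φ(X) = T X T⁻¹` or `φ(X) = T Xᵗ T⁻¹` for some `T ∈ GL(n)`. -/
theorem preserver_Mn (n : ℕ) (hn : 3 ≤ n)
    (φ : Matrix (Fin n) (Fin n) ℂ → Matrix (Fin n) (Fin n) ℂ)
    (hcont : Continuous φ)
    (hcomm : ∀ X Y, X * Y = Y * X → φ X * φ Y = φ Y * φ X)
    (hshrink : ∀ X, spectrum ℂ (φ X) ⊆ spectrum ℂ X) :
    ∃ T : Matrix (Fin n) (Fin n) ℂ, IsUnit T ∧
      ((∀ X, φ X = T * X * T⁻¹) ∨ (∀ X, φ X = T * X.transpose * T⁻¹)) := by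
  have h : PMn.Good φ := ⟨hcont, hcomm, hshrink⟩
  obtain ⟨T, hT, hTd⟩ := PMn.key h isUnit_one
  simp only [Matrix.one_mul, inv_one, Matrix.mul_one] at hTd
  have hTT : T⁻¹⁻¹ = T := Matrix.nonsing_inv_nonsing_inv _ ((Matrix.isUnit_iff_isUnit_det _).1 hT)
  have h1 := h.conj isUnit_one (PMn.isUnit_inv hT)
  simp only [Matrix.one_mul, inv_one, Matrix.mul_one, hTT] at h1
  have hL := PMn.eq_Lin h1 hn
  have hJ : PMn.Jord (PMn.Lin fun X => T⁻¹ * φ X * T) := by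
    constructor
    · intro X
      rw [← hL, ← hL]
      exact PMn.sq h1 X
    · intro d
      rw [← hL, hTd]
      calc _ = (T⁻¹ * T) * diagonal d * (T⁻¹ * T) := by simp only [Matrix.mul_assoc]
        _ = _ := by rw [PMn.inv_mul_self hT]; simp
  obtain ⟨S, hS, hX⟩ := hJ.final ⟨0, by lia⟩
  have hback : ∀ X, φ X = T * (T⁻¹ * φ X * T) * T⁻¹ := by
    intro X
    calc φ X = (T * T⁻¹) * φ X * (T * T⁻¹) := by rw [PMn.mul_inv_self hT]; simp
      _ = _ := by simp only [Matrix.mul_assoc]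
  refine ⟨T * S, hT.mul hS, ?_⟩
  refine hX.imp (fun hX X => ?_) (fun hX X => ?_)
  · have := hX X
    rw [← hL] at this
    rw [hback X, this, Matrix.mul_inv_rev]
    simp only [Matrix.mul_assoc]
  · have := hX X
    rw [← hL] at this
    rw [hback X, this, Matrix.mul_inv_rev]
    simp only [Matrix.mul_assoc]
end

section
/- Let n ≥ 3 and let GL(n)_ss denote the set of diagonalizable invertible n×n complex matrices, topologized as a subspace of M_n. A map φ : GL(n)_ss → M_n is continuous, commutativity-preserving and spectrum-shrinking if and only if there exists T ∈ GL(n) such that either φ(X) = T X T⁻¹ for all X ∈ GL(n)_ss, or φ(X) = T Xᵗ T⁻¹ for all X ∈ GL(n)_ss (where Xᵗ denotes the transpose). -/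
open Matrix

namespace GLss

/-! ### Generic topology lemmas -/

/-- `g` is a polynomial function. -/
def IsPoly (g : ℂ → ℂ) : Prop := ∃ p : Polynomial ℂ, ∀ z, g z = p.eval z

lemma IsPoly.const (c : ℂ) : IsPoly (fun _ => c) := ⟨Polynomial.C c, by simp⟩

lemma IsPoly.line (a b : ℂ) : IsPoly (fun z => a + z * b) :=
  ⟨Polynomial.C a + Polynomial.C b * Polynomial.X, fun z => by simp; ring⟩

lemma IsPoly.mul {f g : ℂ → ℂ} (hf : IsPoly f) (hg : IsPoly g) : IsPoly (fun z => f z * g z) := by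
  obtain ⟨p, hp⟩ := hf
  obtain ⟨q, hq⟩ := hg
  exact ⟨p * q, by simp [hp, hq]⟩

lemma IsPoly.prod {ι : Type*} (s : Finset ι) {f : ι → ℂ → ℂ} (hf : ∀ i, IsPoly (f i)) :
    IsPoly (fun z => ∏ i ∈ s, f i z) := by
  choose p hp using hf
  exact ⟨∏ i ∈ s, p i, by simp [hp, Polynomial.eval_prod]⟩

lemma IsPoly.sum {ι : Type*} (s : Finset ι) {f : ι → ℂ → ℂ} (hf : ∀ i, IsPoly (f i)) :
    IsPoly (fun z => ∑ i ∈ s, f i z) := by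
  choose p hp using hf
  exact ⟨∑ i ∈ s, p i, by simp [hp, Polynomial.eval_finsetSum]⟩

lemma IsPoly.det {n : ℕ} {A : ℂ → Matrix (Fin n) (Fin n) ℂ}
    (hA : ∀ i j, IsPoly (fun z => A z i j)) : IsPoly (fun z => (A z).det) := by
  simp only [Matrix.det_apply']
  exact IsPoly.sum _ fun σ => (IsPoly.const _).mul (IsPoly.prod _ fun i => hA _ _)

lemma IsPoly.finite {g : ℂ → ℂ} (hg : IsPoly g) (z₀ : ℂ) (h0 : g z₀ ≠ 0) :
    {z | g z = 0}.Finite := by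
  obtain ⟨p, hp⟩ := hg
  have hp0 : p ≠ 0 := by
    rintro rfl
    simp [hp] at h0
  refine (p.roots.toFinset.finite_toSet).subset ?_
  intro z hz
  simp only [Set.mem_ofPred_eq, hp] at hz
  simp [hp0, hz]

section
variable {E : Type*} [AddCommGroup E] [Module ℂ E] [TopologicalSpace E]
  [IsTopologicalAddGroup E] [ContinuousSMul ℂ E]

lemma preconn (h : E → ℂ) (hp : ∀ p q : E, IsPoly (fun z => h (p + z • q))) :
    IsPreconnected {p | h p ≠ 0} := by
  apply isPreconnected_of_forall_pair
  intro p hpp q hq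
  have hP := hp p (q - p)
  have hfin := hP.finite 0 (by simpa using hpp)
  have hc : IsPreconnected ({z | h (p + z • (q - p)) = 0}ᶜ : Set ℂ) :=
    (Set.Countable.isConnected_compl_of_one_lt_rank (by simp) hfin.countable).2
  refine ⟨(fun z : ℂ => p + z • (q - p)) '' {z | h (p + z • (q - p)) = 0}ᶜ, ?_, ?_, ?_, ?_⟩
  · rintro _ ⟨z, hz, rfl⟩
    exact hz
  · exact ⟨0, by simpa using hpp, by simp⟩
  · exact ⟨1, by simpa using hq, by simp⟩
  · exact hc.image _ (by fun_prop)

lemma dense_ne (h : E → ℂ) (hp : ∀ p q : E, IsPoly (fun z => h (p + z • q)))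
    (q₀ : E) (hq : h q₀ ≠ 0) (p : E) : p ∈ closure {p | h p ≠ 0} := by
  have hP := hp p (q₀ - p)
  have hfin := hP.finite 1 (by simpa using hq)
  have hd : Dense ({z | h (p + z • (q₀ - p)) = 0}ᶜ : Set ℂ) :=
    hfin.countable.dense_compl ℂ
  have h0 : (0 : ℂ) ∈ closure ({z | h (p + z • (q₀ - p)) = 0}ᶜ : Set ℂ) := hd 0
  have hcont : Continuous (fun z : ℂ => p + z • (q₀ - p)) := by fun_prop
  have := map_mem_closure hcont h0 (t := {p | h p ≠ 0}) (fun z hz => hz)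
  simpa using this
end

lemma idx_const {α ι : Type*} [TopologicalSpace α] [PreconnectedSpace α] [Finite ι] [Nonempty α]
    (K : ι → Set α) (hK : ∀ j, IsClosed (K j))
    (hdis : ∀ x j j', x ∈ K j → x ∈ K j' → j = j') (hcov : ∀ x, ∃ j, x ∈ K j) :
    ∃ j, ∀ x, x ∈ K j := by
  obtain ⟨x₀⟩ := ‹Nonempty α›
  obtain ⟨j, hj⟩ := hcov x₀
  refine ⟨j, ?_⟩
  have : IsClopen (K j) := by
    refine ⟨hK j, ?_⟩
    rw [← isClosed_compl_iff]
    have : (K j)ᶜ = ⋃ j' ∈ {j' | j' ≠ j}, K j' := by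
      ext x
      simp only [Set.mem_compl_iff, Set.mem_iUnion, Set.mem_ofPred_eq, exists_prop]
      constructor
      · intro hx
        obtain ⟨j', hj'⟩ := hcov x
        exact ⟨j', fun h => hx (h ▸ hj'), hj'⟩
      · rintro ⟨j', hne, hx⟩ hx'
        exact hne (hdis x _ _ hx hx')
    rw [this]
    exact Set.Finite.isClosed_biUnion (Set.toFinite _) fun i _ => hK i
  have := this.eq_univ ⟨x₀, hj⟩
  intro x
  rw [this]
  trivial

/-! ### The setting -/

/-- Invertible diagonalizable matrices. -/
def Dom {n : ℕ} (X : Matrix (Fin n) (Fin n) ℂ) : Prop :=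
  IsUnit X ∧ ∃ P : Matrix (Fin n) (Fin n) ℂ, ∃ d : Fin n → ℂ,
          IsUnit P ∧ X = P * Matrix.diagonal d * P⁻¹

/-- The preserver hypotheses for (an arbitrary extension of) `φ`. -/
structure Good {n : ℕ} (φ : Matrix (Fin n) (Fin n) ℂ → Matrix (Fin n) (Fin n) ℂ) : Prop where
  cont : ContinuousOn φ {X | Dom X}
  comm : ∀ X Y, Dom X → Dom Y → X * Y = Y * X → φ X * φ Y = φ Y * φ X
  spec : ∀ X, Dom X → spectrum ℂ (φ X) ⊆ spectrum ℂ X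

variable {n : ℕ}

lemma spec_conj {P R : Matrix (Fin n) (Fin n) ℂ} (h : P * R = 1) (X : Matrix (Fin n) (Fin n) ℂ) :
    spectrum ℂ (P * X * R) = spectrum ℂ X := by
  have h' : R * P = 1 := mul_eq_one_comm.mp h
  exact spectrum.units_conjugate (a := X) (u := ⟨P, R, h, h'⟩)

lemma spec_transpose (X : Matrix (Fin n) (Fin n) ℂ) : spectrum ℂ Xᵀ = spectrum ℂ X := by
  ext r
  rw [Matrix.mem_spectrum_iff_isRoot_charpoly, Matrix.mem_spectrum_iff_isRoot_charpoly,
    Matrix.charpoly_transpose]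

lemma dom_mk {P R : Matrix (Fin n) (Fin n) ℂ} (h : P * R = 1) {d : Fin n → ℂ}
    (hd : ∀ i, d i ≠ 0) : Dom (P * diagonal d * R) := by
  have hR : P⁻¹ = R := Matrix.inv_eq_right_inv h
  have hP : IsUnit P := IsUnit.of_mul_eq_one _ h
  have hR' : IsUnit R := IsUnit.of_mul_eq_one _ (mul_eq_one_comm.mp h)
  refine ⟨(hP.mul ?_).mul hR', P, d, hP, by rw [hR]⟩
  rw [Matrix.isUnit_diagonal, Pi.isUnit_iff]
  exact fun i => (hd i).isUnit

lemma dom_iff {X : Matrix (Fin n) (Fin n) ℂ} : Dom X ↔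
    ∃ P R : Matrix (Fin n) (Fin n) ℂ, ∃ d : Fin n → ℂ, P * R = 1 ∧ (∀ i, d i ≠ 0) ∧
      X = P * diagonal d * R := by
  constructor
  · rintro ⟨hX, P, d, hP, rfl⟩
    have h : P * P⁻¹ = 1 := Matrix.mul_nonsing_inv _ ((Matrix.isUnit_iff_isUnit_det _).mp hP)
    refine ⟨P, P⁻¹, d, h, ?_, rfl⟩
    have h0 : (0 : ℂ) ∉ spectrum ℂ (P * diagonal d * P⁻¹) := by
      rw [spectrum.zero_mem_iff]
      exact not_not.mpr hX
    rw [spec_conj h, spectrum_diagonal] at h0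
    intro i hi
    exact h0 ⟨i, hi⟩
  · rintro ⟨P, R, d, h, hd, rfl⟩
    exact dom_mk h hd

lemma Dom.conj {P R : Matrix (Fin n) (Fin n) ℂ} (h : P * R = 1) {X : Matrix (Fin n) (Fin n) ℂ}
    (hX : Dom X) : Dom (P * X * R) := by
  obtain ⟨P', R', d, h', hd, rfl⟩ := dom_iff.mp hX
  refine dom_iff.mpr ⟨P * P', R' * R, d, ?_, hd, by simp only [Matrix.mul_assoc]⟩
  calc P * P' * (R' * R) = P * (P' * R') * R := by simp only [Matrix.mul_assoc]
    _ = 1 := by rw [h', Matrix.mul_one, h]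

lemma Dom.transpose {X : Matrix (Fin n) (Fin n) ℂ} (hX : Dom X) : Dom Xᵀ := by
  obtain ⟨P', R', d, h', hd, rfl⟩ := dom_iff.mp hX
  refine dom_iff.mpr ⟨R'ᵀ, P'ᵀ, d, ?_, hd, ?_⟩
  · rw [← Matrix.transpose_mul, h', Matrix.transpose_one]
  · simp [Matrix.transpose_mul, Matrix.mul_assoc]

lemma Good.conj {φ : Matrix (Fin n) (Fin n) ℂ → Matrix (Fin n) (Fin n) ℂ} (hφ : Good φ)
    {P R : Matrix (Fin n) (Fin n) ℂ} (h : P * R = 1) : Good (fun X => φ (P * X * R)) where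
  cont := by
    refine hφ.cont.comp (by fun_prop) ?_
    intro X hX
    exact Dom.conj h hX
  comm := by
    intro X Y hX hY hXY
    have h' : R * P = 1 := mul_eq_one_comm.mp h
    refine hφ.comm _ _ (hX.conj h) (hY.conj h) ?_
    calc P * X * R * (P * Y * R) = P * X * (R * P) * Y * R := by simp only [Matrix.mul_assoc]
      _ = P * (X * Y) * R := by rw [h']; simp only [Matrix.mul_one, Matrix.mul_assoc]
      _ = P * (Y * X) * R := by rw [hXY]
      _ = P * Y * (R * P) * X * R := by rw [h']; simp only [Matrix.mul_one, Matrix.mul_assoc]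
      _ = _ := by simp only [Matrix.mul_assoc]
  spec := by
    intro X hX
    have := hφ.spec _ (hX.conj h)
    rwa [spec_conj h] at this

lemma Good.transpose {φ : Matrix (Fin n) (Fin n) ℂ → Matrix (Fin n) (Fin n) ℂ} (hφ : Good φ) :
    Good (fun X => φ Xᵀ) where
  cont := by
    refine hφ.cont.comp (by fun_prop) ?_
    intro X hX
    exact Dom.transpose hX
  comm := by
    intro X Y hX hY hXY
    refine hφ.comm _ _ hX.transpose hY.transpose ?_
    rw [← Matrix.transpose_mul, ← Matrix.transpose_mul, hXY]
  spec := by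
    intro X hX
    have := hφ.spec _ hX.transpose
    rwa [spec_transpose] at this

end GLss

open Matrix

namespace GLss
variable {n : ℕ}

/-- Nonvanishing iff all `d i` are nonzero and distinct. -/
def hconf (d : Fin n → ℂ) : ℂ :=
  (∏ i, d i) * ∏ q ∈ (Finset.univ : Finset (Fin n)).offDiag, (d q.1 - d q.2)

lemma hconf_ne {d : Fin n → ℂ} : hconf d ≠ 0 ↔ (∀ i, d i ≠ 0) ∧ Function.Injective d := by
  simp only [hconf, mul_ne_zero_iff, Finset.prod_ne_zero_iff, Finset.mem_offDiag,
    Finset.mem_univ, true_and, forall_true_left, sub_ne_zero]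
  refine and_congr Iff.rfl ?_
  constructor
  · intro h i j hij
    by_contra hne
    exact h (i, j) hne hij
  · intro h q hq hd
    exact hq (h hd)

lemma hconf_poly (p q : Fin n → ℂ) : IsPoly (fun z => hconf (p + z • q)) := by
  refine (IsPoly.prod _ fun i => ?_).mul (IsPoly.prod _ fun i => ?_)
  · simpa using IsPoly.line (p i) (q i)
  · have := IsPoly.line (p i.1 - p i.2) (q i.1 - q i.2)
    convert this using 2
    simp
    ring

def hall (p : Matrix (Fin n) (Fin n) ℂ × (Fin n → ℂ)) : ℂ := p.1.det * hconf p.2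

lemma hall_poly (p q : Matrix (Fin n) (Fin n) ℂ × (Fin n → ℂ)) :
    IsPoly (fun z => hall (p + z • q)) := by
  refine IsPoly.mul (IsPoly.det fun i j => ?_) (hconf_poly p.2 q.2)
  simpa using IsPoly.line (p.1 i j) (q.1 i j)

lemma base_conf : hconf (fun i : Fin n => ((i : ℕ) : ℂ) + 1) ≠ 0 := by
  rw [hconf_ne]
  refine ⟨fun i => Nat.cast_add_one_ne_zero _, fun i j h => ?_⟩
  simpa [Fin.val_inj] using h

open Polynomial in
lemma cp_count (A : Matrix (Fin n) (Fin n) ℂ) {d : Fin n → ℂ} (hd : Function.Injective d)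
    (hs : spectrum ℂ A ⊆ Set.range d) :
    A.charpoly = ∏ i, (X - C (d i)) ^ (A.charpoly.roots.count (d i)) := by
  classical
  have h1 := (IsAlgClosed.splits A.charpoly).eq_prod_roots_of_monic A.charpoly_monic
  conv_lhs => rw [h1]
  rw [Finset.prod_multiset_map_count]
  have : A.charpoly.roots.toFinset ⊆ Finset.univ.image d := by
    intro r hr
    rw [Multiset.mem_toFinset, mem_roots A.charpoly_monic.ne_zero,
      ← Matrix.mem_spectrum_iff_isRoot_charpoly] at hr
    obtain ⟨i, rfl⟩ := hs hr
    simp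
  rw [Finset.prod_subset this, Finset.prod_image (fun i _ j _ h => hd h)]
  intro r _ hr
  rw [Multiset.mem_toFinset] at hr
  rw [Multiset.count_eq_zero_of_notMem hr, pow_zero]

open Polynomial in
lemma count_prod {d : Fin n → ℂ} (hd : Function.Injective d) (m : Fin n → ℕ) (j : Fin n) :
    (∏ i, (X - C (d i)) ^ (m i)).roots.count (d j) = m j := by
  classical
  have hne : (∏ i, (X - C (d i)) ^ (m i)) ≠ 0 :=
    Finset.prod_ne_zero_iff.mpr fun i _ => pow_ne_zero _ (X_sub_C_ne_zero _)
  rw [Polynomial.roots_prod _ _ hne, Multiset.count_bind]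
  simp only [roots_pow, roots_X_sub_C, Multiset.count_nsmul, Multiset.count_singleton]
  change ∑ i, _ = _
  rw [Finset.sum_eq_single j]
  · simp
  · intro i _ hij
    simp [hd.ne hij.symm]
  · simp

open Polynomial in
lemma charpoly_eq (hn : 0 < n) {φ : Matrix (Fin n) (Fin n) ℂ → Matrix (Fin n) (Fin n) ℂ}
    (hφ : Good φ) {P R : Matrix (Fin n) (Fin n) ℂ} (h : P * R = 1) {d : Fin n → ℂ}
    (hd : hconf d ≠ 0) : (φ (P * diagonal d * R)).charpoly = ∏ i, (X - C (d i)) := by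
  classical
  let S : Set (Matrix (Fin n) (Fin n) ℂ × (Fin n → ℂ)) := {p | hall p ≠ 0}
  have : PreconnectedSpace S := Subtype.preconnectedSpace (preconn hall hall_poly)
  have hmem : ∀ {P R : Matrix (Fin n) (Fin n) ℂ} {d : Fin n → ℂ}, P * R = 1 → hconf d ≠ 0 →
      (P, d) ∈ S := by
    intro P R d h hd
    refine mul_ne_zero ?_ hd
    intro h0
    have := congrArg Matrix.det h
    simp only [Matrix.det_mul, Matrix.det_one] at this
    rw [show P.det = 0 from h0] at this
    simp at this
  have hS : ∀ p : S, IsUnit p.1.1.det ∧ p.1.1 * p.1.1⁻¹ = 1 ∧ hconf p.1.2 ≠ 0 := by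
    rintro ⟨p, hp⟩
    have := mul_ne_zero_iff.mp hp
    exact ⟨this.1.isUnit, Matrix.mul_nonsing_inv _ this.1.isUnit, this.2⟩
  have : Nonempty S := ⟨⟨_, hmem h hd⟩⟩
  let Y : S → Matrix (Fin n) (Fin n) ℂ := fun p => p.1.1 * diagonal p.1.2 * p.1.1⁻¹
  have hYdom : ∀ p, Dom (Y p) := fun p => dom_mk (hS p).2.1 (hconf_ne.mp (hS p).2.2).1
  have hYc : Continuous Y := by
    have hinv : Continuous (fun p : S => p.1.1⁻¹) := by
      rw [continuous_iff_continuousAt]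
      intro p
      have h1 : ContinuousAt (fun A : Matrix (Fin n) (Fin n) ℂ => A⁻¹) p.1.1 := by
        refine continuousAt_matrix_inv _ ?_
        obtain ⟨u, hu⟩ := (hS p).1
        rw [← hu]
        exact NormedRing.inverse_continuousAt u
      have h2 : ContinuousAt (fun p : S => p.1.1) p := by fun_prop
      exact ContinuousAt.comp (g := fun A : Matrix (Fin n) (Fin n) ℂ => A⁻¹) h1 h2
    have h3 : Continuous (fun p : S => diagonal p.1.2) :=
      Continuous.matrix_diagonal (by fun_prop)
    have h4 : Continuous (fun p : S => p.1.1) := by fun_prop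
    exact (h4.mul h3).mul hinv
  have hφY : Continuous (fun p => φ (Y p)) := hφ.cont.comp_continuous hYc hYdom
  let K : (Fin n → Fin (n + 1)) → Set S := fun m =>
    {p | ∀ x : ℂ, (scalar (Fin n) x - φ (Y p)).det = ∏ i, (x - p.1.2 i) ^ (m i : ℕ)}
  have hKiff : ∀ m p, p ∈ K m ↔ (φ (Y p)).charpoly = ∏ i, (X - C (p.1.2 i)) ^ (m i : ℕ) := by
    intro m p
    constructor
    · intro hp
      apply Polynomial.funext
      intro x
      rw [Matrix.eval_charpoly, hp x]
      simp [Polynomial.eval_prod]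
    · intro hp x
      rw [← Matrix.eval_charpoly, hp]
      simp [Polynomial.eval_prod]
  obtain ⟨m, hm⟩ := idx_const K (by
      intro m
      have : K m = ⋂ x : ℂ, {p | (scalar (Fin n) x - φ (Y p)).det
          = ∏ i, (x - p.1.2 i) ^ (m i : ℕ)} := by
        ext p; simp [K]
      rw [this]
      refine isClosed_iInter fun x => isClosed_eq ?_ ?_
      · exact Continuous.matrix_det (continuous_const.sub hφY)
      · fun_prop)
    (by
      intro p m m' h1 h2
      rw [hKiff] at h1 h2
      have hinj := (hconf_ne.mp (hS p).2.2).2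
      funext j
      apply Fin.ext
      rw [← count_prod hinj (fun i => (m i : ℕ)) j, ← h1, h2,
        count_prod hinj (fun i => (m' i : ℕ)) j])
    (by
      intro p
      have hinj := (hconf_ne.mp (hS p).2.2).2
      have hsp : spectrum ℂ (φ (Y p)) ⊆ Set.range p.1.2 := by
        refine (hφ.spec _ (hYdom p)).trans ?_
        rw [spec_conj (hS p).2.1, spectrum_diagonal]
      refine ⟨fun i => ⟨(φ (Y p)).charpoly.roots.count (p.1.2 i), ?_⟩, ?_⟩
      · refine Nat.lt_succ_of_le ((Multiset.count_le_card _ _).trans ?_)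
        refine (Polynomial.card_roots' _).trans ?_
        rw [Matrix.charpoly_natDegree_eq_dim, Fintype.card_fin]
      · rw [hKiff]
        exact cp_count _ hinj hsp)
  -- symmetry
  let p₀ : S := ⟨(P, d), hmem h hd⟩
  have hinj := (hconf_ne.mp hd).2
  have hsym : ∀ σ : Equiv.Perm (Fin n), ∀ i, m (σ i) = m i := by
    intro σ i
    have hPR : P.submatrix id σ * R.submatrix σ id = 1 := by
      rw [Matrix.submatrix_mul_equiv, h]; simp
    have hdσ : hconf (d ∘ σ) ≠ 0 := by
      rw [hconf_ne] at hd ⊢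
      exact ⟨fun i => hd.1 _, hd.2.comp σ.injective⟩
    let p₁ : S := ⟨(P.submatrix id σ, d ∘ σ), hmem hPR hdσ⟩
    have hY : Y p₁ = Y p₀ := by
      have e1 : (P.submatrix id σ)⁻¹ = R.submatrix σ id := Matrix.inv_eq_right_inv hPR
      have e2 : P⁻¹ = R := Matrix.inv_eq_right_inv h
      change P.submatrix id σ * diagonal (d ∘ σ) * (P.submatrix id σ)⁻¹ = P * diagonal d * P⁻¹
      rw [e1, e2, ← Matrix.submatrix_diagonal_equiv d σ, Matrix.submatrix_mul_equiv,
        Matrix.submatrix_mul_equiv]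
      simp
    have h0 := (hKiff m p₀).mp (hm p₀)
    have h1 := (hKiff m p₁).mp (hm p₁)
    rw [hY, h0] at h1
    have e1 := count_prod hinj (fun i => (m i : ℕ)) (σ i)
    have e2 := count_prod (hinj.comp σ.injective) (fun i => (m i : ℕ)) i
    apply Fin.ext
    refine e1.symm.trans (Eq.trans ?_ e2)
    exact congrArg (fun q : ℂ[X] => q.roots.count (d (σ i))) h1
  have hconst : ∀ i, m i = m ⟨0, hn⟩ := by
    intro i
    have := hsym (Equiv.swap i ⟨0, hn⟩) ⟨0, hn⟩
    simpa using this
  have h0 := (hKiff m p₀).mp (hm p₀)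
  have hY0 : Y p₀ = P * diagonal d * R := by
    change P * diagonal d * P⁻¹ = _
    rw [Matrix.inv_eq_right_inv h]
  rw [hY0] at h0
  have hdeg := congrArg Polynomial.natDegree h0
  rw [Matrix.charpoly_natDegree_eq_dim, Fintype.card_fin,
    Polynomial.natDegree_prod _ _ (fun i _ => pow_ne_zero _ (X_sub_C_ne_zero _))] at hdeg
  simp only [natDegree_pow, natDegree_X_sub_C, mul_one, hconst, Finset.sum_const,
    Finset.card_univ, Fintype.card_fin, smul_eq_mul] at hdeg
  have hm1 : (m ⟨0, hn⟩ : ℕ) = 1 := by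
    have : n * (m ⟨0, hn⟩ : ℕ) = n * 1 := by omega
    exact Nat.eq_of_mul_eq_mul_left hn this
  rw [h0]
  refine Finset.prod_congr rfl fun i _ => ?_
  rw [hconst, hm1, pow_one]

end GLss

open Matrix

namespace GLss
variable {n : ℕ}

open Polynomial in
lemma diag_of_charpoly {A : Matrix (Fin n) (Fin n) ℂ} {d : Fin n → ℂ}
    (hd : Function.Injective d) (hA : A.charpoly = ∏ i, (X - C (d i))) :
    ∃ Q S : Matrix (Fin n) (Fin n) ℂ, Q * S = 1 ∧ A = Q * diagonal d * S := by
  have hv : ∀ i, ∃ v : Fin n → ℂ, v ≠ 0 ∧ A *ᵥ v = d i • v := by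
    intro i
    have h0 : (scalar (Fin n) (d i) - A).det = 0 := by
      rw [← Matrix.eval_charpoly, hA, Polynomial.eval_prod]
      exact Finset.prod_eq_zero (Finset.mem_univ i) (by simp)
    obtain ⟨v, hv, h⟩ := Matrix.exists_mulVec_eq_zero_iff.mpr h0
    refine ⟨v, hv, ?_⟩
    rw [Matrix.sub_mulVec, sub_eq_zero] at h
    rw [← h]
    ext k
    simp [Matrix.scalar_apply, Matrix.mulVec_diagonal]
  choose v hv0 hv using hv
  have hli : LinearIndependent ℂ v := by
    refine Module.End.eigenvectors_linearIndependent' (Matrix.toLin' A) d hd v fun i => ?_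
    refine ⟨Module.End.mem_eigenspace_iff.mpr ?_, hv0 i⟩
    rw [Matrix.toLin'_apply, hv]
  let Q : Matrix (Fin n) (Fin n) ℂ := (Matrix.of v)ᵀ
  have hQ : IsUnit Q := by
    rw [← Matrix.linearIndependent_cols_iff_isUnit]
    exact hli
  have hQS : Q * Q⁻¹ = 1 := Matrix.mul_nonsing_inv _ ((Matrix.isUnit_iff_isUnit_det _).mp hQ)
  refine ⟨Q, Q⁻¹, hQS, ?_⟩
  have : A * Q = Q * diagonal d := by
    ext k i
    have := congrFun (hv i) k
    simp only [Matrix.mulVec, dotProduct, Pi.smul_apply, smul_eq_mul] at this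
    rw [Matrix.mul_diagonal, Matrix.mul_apply]
    simp only [Q, Matrix.transpose_apply, Matrix.of_apply]
    rw [this, mul_comm]
  rw [← this, Matrix.mul_assoc, hQS, Matrix.mul_one]

/-- Every torus is mapped to a torus, eigenvalue by eigenvalue. -/
lemma torus (hn : 0 < n) {φ : Matrix (Fin n) (Fin n) ℂ → Matrix (Fin n) (Fin n) ℂ}
    (hφ : Good φ) {P R : Matrix (Fin n) (Fin n) ℂ} (h : P * R = 1) :
    ∃ Q S : Matrix (Fin n) (Fin n) ℂ, Q * S = 1 ∧ ∀ d : Fin n → ℂ, (∀ i, d i ≠ 0) →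
      φ (P * diagonal d * R) = Q * diagonal d * S := by
  have h' : R * P = 1 := mul_eq_one_comm.mp h
  obtain ⟨d₀, hd₀⟩ : ∃ d₀ : Fin n → ℂ, hconf d₀ ≠ 0 := ⟨_, base_conf⟩
  have hd₀' := hconf_ne.mp hd₀
  obtain ⟨Q, S, hQS, h0⟩ := diag_of_charpoly hd₀'.2 (charpoly_eq hn hφ h hd₀)
  have hSQ : S * Q = 1 := mul_eq_one_comm.mp hQS
  refine ⟨Q, S, hQS, ?_⟩
  let G : (Fin n → ℂ) → Matrix (Fin n) (Fin n) ℂ := fun d => S * φ (P * diagonal d * R) * Q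
  have hGφ : ∀ d, φ (P * diagonal d * R) = Q * G d * S := by
    intro d
    calc φ (P * diagonal d * R) = (Q * S) * φ (P * diagonal d * R) * (Q * S) := by
          rw [hQS, Matrix.one_mul, Matrix.mul_one]
      _ = _ := by simp only [G, Matrix.mul_assoc]
  have hG0 : G d₀ = diagonal d₀ := by
    simp only [G]
    rw [h0]
    calc S * (Q * diagonal d₀ * S) * Q = (S * Q) * diagonal d₀ * (S * Q) := by
          simp only [Matrix.mul_assoc]
      _ = _ := by rw [hSQ, Matrix.one_mul, Matrix.mul_one]
  have hGdiag : ∀ d : Fin n → ℂ, (∀ i, d i ≠ 0) → G d = diagonal (fun i => G d i i) := by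
    intro d hd
    have hc : P * diagonal d * R * (P * diagonal d₀ * R)
        = P * diagonal d₀ * R * (P * diagonal d * R) := by
      calc P * diagonal d * R * (P * diagonal d₀ * R)
          = P * diagonal d * (R * P) * diagonal d₀ * R := by simp only [Matrix.mul_assoc]
        _ = P * (diagonal d * diagonal d₀) * R := by
          rw [h', Matrix.mul_one]; simp only [Matrix.mul_assoc]
        _ = P * (diagonal d₀ * diagonal d) * R := by
          rw [diagonal_mul_diagonal, diagonal_mul_diagonal]; simp only [mul_comm]
        _ = P * diagonal d₀ * (R * P) * diagonal d * R := by
          rw [h', Matrix.mul_one]; simp only [Matrix.mul_assoc]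
        _ = _ := by simp only [Matrix.mul_assoc]
    have hc2 := hφ.comm _ _ (dom_mk h hd) (dom_mk h hd₀'.1) hc
    rw [hGφ d, hGφ d₀, hG0] at hc2
    have hc3 : G d * diagonal d₀ = diagonal d₀ * G d := by
      have := congrArg (fun Z => S * Z * Q) hc2
      calc G d * diagonal d₀ = (S * Q) * G d * (S * Q) * diagonal d₀ * (S * Q) := by
            rw [hSQ]; simp
        _ = S * (Q * G d * S * (Q * diagonal d₀ * S)) * Q := by simp only [Matrix.mul_assoc]
        _ = S * (Q * diagonal d₀ * S * (Q * G d * S)) * Q := this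
        _ = (S * Q) * diagonal d₀ * (S * Q) * G d * (S * Q) := by simp only [Matrix.mul_assoc]
        _ = _ := by rw [hSQ]; simp
    ext i j
    by_cases hij : i = j
    · subst hij; simp
    · rw [diagonal_apply_ne _ hij]
      have := congrFun (congrFun hc3 i) j
      rw [Matrix.mul_diagonal, Matrix.diagonal_mul] at this
      have h1 : G d i j * (d₀ j - d₀ i) = 0 := by linear_combination this
      rcases mul_eq_zero.mp h1 with h2 | h2
      · exact h2
      · exact absurd (hd₀'.2 (sub_eq_zero.mp h2)).symm hij
  have hGmem : ∀ d : Fin n → ℂ, (∀ i, d i ≠ 0) → ∀ i, ∃ j, G d i i = d j := by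
    intro d hd i
    have h1 := hφ.spec _ (dom_mk h hd)
    rw [spec_conj h, hGφ, spec_conj hQS, hGdiag d hd, spectrum_diagonal, spectrum_diagonal] at h1
    obtain ⟨j, hj⟩ := h1 ⟨i, rfl⟩
    exact ⟨j, hj.symm⟩
  have hGc : ContinuousOn G {d | ∀ i, d i ≠ 0} := by
    have : ContinuousOn (fun d : Fin n → ℂ => φ (P * diagonal d * R)) {d | ∀ i, d i ≠ 0} := by
      refine hφ.cont.comp (Continuous.continuousOn ?_) (fun d hd => dom_mk h hd)
      have h3 : Continuous (fun d : Fin n → ℂ => diagonal d) :=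
        Continuous.matrix_diagonal continuous_id
      exact (continuous_const.mul h3).mul continuous_const
    exact (continuousOn_const.mul this).mul continuousOn_const
  let S' : Set (Fin n → ℂ) := {d | hconf d ≠ 0}
  have hsub : S' ⊆ {d | ∀ i, d i ≠ 0} := fun d hd => (hconf_ne.mp hd).1
  have hreg : ∀ d ∈ S', ∀ i, G d i i = d i := by
    intro d hd i
    have : PreconnectedSpace S' := Subtype.preconnectedSpace (preconn hconf hconf_poly)
    have : Nonempty S' := ⟨⟨d₀, hd₀⟩⟩
    have hc : Continuous (fun p : S' => G p.1 i i) := by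
      have : Continuous (fun p : S' => G p.1) :=
        hGc.comp_continuous continuous_subtype_val (fun p => hsub p.2)
      exact this.matrix_elem i i
    obtain ⟨j, hj⟩ := idx_const (fun j : Fin n => {p : S' | G p.1 i i = p.1 j})
      (fun j => isClosed_eq hc ((continuous_apply j).comp continuous_subtype_val))
      (fun p j j' h1 h2 => (hconf_ne.mp p.2).2 (Eq.trans (Eq.symm h1) h2))
      (fun p => hGmem p.1 (hsub p.2) i)
    have h1 : G d₀ i i = d₀ j := hj ⟨d₀, hd₀⟩
    rw [hG0, diagonal_apply_eq] at h1
    have := hd₀'.2 h1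
    subst this
    exact hj ⟨d, hd⟩
  intro d hd
  rw [hGφ d, hGdiag d hd]
  congr 3
  funext i
  have hcl : d ∈ closure S' := dense_ne hconf hconf_poly d₀ hd₀ d
  have hne : (nhdsWithin d S').NeBot := mem_closure_iff_nhdsWithin_neBot.mp hcl
  have t1 : Filter.Tendsto (fun d => G d i i) (nhdsWithin d S') (nhds (G d i i)) := by
    have := ((hGc d hd).mono hsub).tendsto
    exact ((continuous_id.matrix_elem i i).tendsto (G d)).comp this
  have t2 : Filter.Tendsto (fun d : Fin n → ℂ => d i) (nhdsWithin d S') (nhds (d i)) :=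
    ((continuous_apply i).tendsto d).mono_left nhdsWithin_le_nhds
  refine tendsto_nhds_unique t1 (t2.congr' ?_)
  filter_upwards [self_mem_nhdsWithin] with e he
  exact (hreg e he i).symm

end GLss

open Matrix

namespace GLss
variable {n : ℕ}

/-- The induced map on rank-one idempotents `x ⊗ f`, `f x = 1`. -/
def F (φ : Matrix (Fin n) (Fin n) ℂ → Matrix (Fin n) (Fin n) ℂ) (x f : Fin n → ℂ) :
    Matrix (Fin n) (Fin n) ℂ := φ (1 + vecMulVec x f) - 1

lemma mul_diag_mul (P R : Matrix (Fin n) (Fin n) ℂ) (d : Fin n → ℂ) :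
    P * diagonal d * R = ∑ i, d i • vecMulVec (fun k => P k i) (R i) := by
  ext a b
  rw [Matrix.mul_apply, Matrix.sum_apply]
  refine Finset.sum_congr rfl fun i _ => ?_
  rw [Matrix.mul_diagonal, Matrix.smul_apply, vecMulVec_apply, smul_eq_mul]
  ring

lemma one_add_diag {P R : Matrix (Fin n) (Fin n) ℂ} (h : P * R = 1) (c : Fin n → ℂ) :
    P * diagonal (fun i => 1 + c i) * R = 1 + P * diagonal c * R := by
  have : diagonal (fun i => 1 + c i) = (1 : Matrix (Fin n) (Fin n) ℂ) + diagonal c := by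
    rw [← diagonal_one, diagonal_add]
  rw [this, Matrix.mul_add, Matrix.add_mul, Matrix.mul_one, h]

lemma frame (hn : 0 < n) {φ : Matrix (Fin n) (Fin n) ℂ → Matrix (Fin n) (Fin n) ℂ}
    (hφ : Good φ) {P R : Matrix (Fin n) (Fin n) ℂ} (h : P * R = 1) :
    (∑ i, F φ (fun k => P k i) (R i) = 1) ∧
    (∀ d : Fin n → ℂ, (∀ i, d i ≠ 0) →
      φ (P * diagonal d * R) = ∑ i, d i • F φ (fun k => P k i) (R i)) := by
  obtain ⟨Q, S, hQS, hd⟩ := torus hn hφ h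
  have hF : ∀ i, F φ (fun k => P k i) (R i) = vecMulVec (fun k => Q k i) (S i) := by
    intro i
    have e1 : ∀ A B : Matrix (Fin n) (Fin n) ℂ, vecMulVec (fun k => A k i) (B i)
        = A * diagonal (Pi.single i 1) * B := by
      intro A B
      rw [mul_diag_mul, Finset.sum_eq_single i]
      · simp
      · intro j _ hj; simp [Pi.single_eq_of_ne hj]
      · simp
    rw [F, e1, e1, ← one_add_diag h, hd, one_add_diag hQS]
    · simp
    · intro j
      by_cases hj : j = i
      · subst hj; norm_num
      · simp [Pi.single_eq_of_ne hj]
  simp only [hF]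
  constructor
  · have := mul_diag_mul Q S (fun _ => 1)
    simp only [one_smul] at this
    rw [← this, diagonal_one, Matrix.mul_one, hQS]
  · intro d hd'
    rw [hd d hd', mul_diag_mul]

lemma frame_lin (hn : 0 < n) {φ : Matrix (Fin n) (Fin n) ℂ → Matrix (Fin n) (Fin n) ℂ}
    (hφ : Good φ) {P R : Matrix (Fin n) (Fin n) ℂ} (h : P * R = 1) (c : Fin n → ℂ)
    (hc : ∀ i, 1 + c i ≠ 0) :
    φ (1 + P * diagonal c * R) = 1 + ∑ i, c i • F φ (fun k => P k i) (R i) := by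
  obtain ⟨h1, h2⟩ := frame hn hφ h
  rw [← one_add_diag h, h2 _ hc]
  simp only [add_smul, one_smul, Finset.sum_add_distrib, h1]

lemma F_conj (φ : Matrix (Fin n) (Fin n) ℂ → Matrix (Fin n) (Fin n) ℂ)
    {P R : Matrix (Fin n) (Fin n) ℂ} (h : P * R = 1) (x f : Fin n → ℂ) :
    F (fun X => φ (P * X * R)) x f = F φ (P *ᵥ x) (f ᵥ* R) := by
  simp only [F]
  rw [Matrix.mul_add, Matrix.add_mul, Matrix.mul_one, h, Matrix.mul_vecMulVec,
    Matrix.vecMulVec_mul]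

lemma F_transpose (φ : Matrix (Fin n) (Fin n) ℂ → Matrix (Fin n) (Fin n) ℂ) (x f : Fin n → ℂ) :
    F (fun X => φ Xᵀ) x f = F φ f x := by
  simp only [F]
  rw [Matrix.transpose_add, Matrix.transpose_one, Matrix.transpose_vecMulVec]

lemma F_scale (φ : Matrix (Fin n) (Fin n) ℂ → Matrix (Fin n) (Fin n) ℂ) (x f : Fin n → ℂ)
    (c : ℂ) : F φ (c⁻¹ • x) f = F φ x (c⁻¹ • f) := by
  simp only [F, Matrix.smul_vecMulVec, Matrix.vecMulVec_smul]

/-- standard basis vector -/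
abbrev e (i : Fin n) : Fin n → ℂ := Pi.single i 1

/-- off-diagonal increments -/
def al (φ : Matrix (Fin n) (Fin n) ℂ → Matrix (Fin n) (Fin n) ℂ) (i j : Fin n) (s : ℂ) :
    Matrix (Fin n) (Fin n) ℂ := F φ (e i) (e i + s • e j) - F φ (e i) (e i)

lemma F_row_aux (hn : 0 < n) {φ : Matrix (Fin n) (Fin n) ℂ → Matrix (Fin n) (Fin n) ℂ}
    (hφ : Good φ) (i : Fin n) (f : Fin n → ℂ) (hf : f i = 1) :
    F φ (e i) f = 1 - ∑ j ∈ Finset.univ.erase i, F φ (e j - f j • e i) (e j) := by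
  let R : Matrix (Fin n) (Fin n) ℂ := 1 + vecMulVec (e i) (f - e i)
  let P : Matrix (Fin n) (Fin n) ℂ := 1 - vecMulVec (e i) (f - e i)
  have h : P * R = 1 := by
    have h0 : vecMulVec (e i) (f - e i) * vecMulVec (e i) (f - e i) = 0 := by
      rw [Matrix.vecMulVec_mul_vecMulVec]
      simp [e, hf]
    simp only [P, R, Matrix.sub_mul, Matrix.mul_add, Matrix.mul_one, Matrix.one_mul, h0]
    simp
  have h1 := (frame hn hφ h).1
  rw [← Finset.add_sum_erase _ _ (Finset.mem_univ i)] at h1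
  have e1 : (fun k => P k i) = e i := by
    funext k
    simp [P, e, vecMulVec_apply, hf, Matrix.one_apply, Pi.single_apply]
  have e2 : R i = f := by
    funext k
    simp [R, e, vecMulVec_apply, Matrix.one_apply, Pi.single_apply, eq_comm]
  rw [e1, e2] at h1
  rw [eq_sub_iff_add_eq, ← h1]
  congr 1
  refine Finset.sum_congr rfl fun j hj => ?_
  have hji : j ≠ i := Finset.ne_of_mem_erase hj
  congr 1
  · funext k
    simp [P, e, vecMulVec_apply, Matrix.one_apply, Pi.single_apply, hji]
  · funext k
    simp [R, e, vecMulVec_apply, Matrix.one_apply, Pi.single_apply, hji, eq_comm]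

lemma al_eq (hn : 0 < n) {φ : Matrix (Fin n) (Fin n) ℂ → Matrix (Fin n) (Fin n) ℂ}
    (hφ : Good φ) {i j : Fin n} (hij : i ≠ j) (s : ℂ) :
    al φ i j s = F φ (e j) (e j) - F φ (e j - s • e i) (e j) := by
  rw [al, F_row_aux hn hφ i (e i + s • e j) (by simp [hij]), F_row_aux hn hφ i (e i) (by simp)]
  rw [sub_sub_sub_cancel_left, ← Finset.sum_sub_distrib, Finset.sum_eq_single j]
  · simp [hij]
  · intro k hk hkj
    have : k ≠ i := Finset.ne_of_mem_erase hk
    simp [this, hkj]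
  · intro h
    exact absurd (Finset.mem_erase.mpr ⟨hij.symm, Finset.mem_univ _⟩) h

lemma F_row (hn : 0 < n) {φ : Matrix (Fin n) (Fin n) ℂ → Matrix (Fin n) (Fin n) ℂ}
    (hφ : Good φ) (i : Fin n) (f : Fin n → ℂ) (hf : f i = 1) :
    F φ (e i) f = F φ (e i) (e i) + ∑ j ∈ Finset.univ.erase i, al φ i j (f j) := by
  rw [Finset.sum_congr rfl fun j hj => al_eq hn hφ (Finset.ne_of_mem_erase hj).symm (f j),
    F_row_aux hn hφ i f hf, F_row_aux hn hφ i (e i) (by simp), Finset.sum_sub_distrib]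
  have : ∑ j ∈ Finset.univ.erase i, F φ (e j - (e i : Fin n → ℂ) j • e i) (e j)
      = ∑ j ∈ Finset.univ.erase i, F φ (e j) (e j) := by
    refine Finset.sum_congr rfl fun j hj => ?_
    simp [Finset.ne_of_mem_erase hj]
  rw [this]
  abel

lemma al_zero (φ : Matrix (Fin n) (Fin n) ℂ → Matrix (Fin n) (Fin n) ℂ) (i j : Fin n) :
    al φ i j 0 = 0 := by simp [al]

/-- Two-term version of `F_row`. -/
lemma F_row_two (hn : 0 < n) {φ : Matrix (Fin n) (Fin n) ℂ → Matrix (Fin n) (Fin n) ℂ}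
    (hφ : Good φ) {i j k : Fin n} (hij : i ≠ j) (hik : i ≠ k) (hjk : j ≠ k) (s t : ℂ) :
    F φ (e i) (e i + s • e j + t • e k) = F φ (e i) (e i) + al φ i j s + al φ i k t := by
  rw [F_row hn hφ i _ (by simp [hij, hik]), add_assoc (F φ (e i) (e i))]
  congr 1
  have hj : j ∈ Finset.univ.erase i := Finset.mem_erase.mpr ⟨hij.symm, Finset.mem_univ _⟩
  have hk : k ∈ (Finset.univ.erase i).erase j :=
    Finset.mem_erase.mpr ⟨hjk.symm, Finset.mem_erase.mpr ⟨hik.symm, Finset.mem_univ _⟩⟩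
  rw [← Finset.add_sum_erase _ _ hj, ← Finset.add_sum_erase _ _ hk, Finset.sum_eq_zero]
  · simp [hij.symm, hik.symm, hjk, hjk.symm]
  · intro l hl
    simp only [Finset.mem_erase] at hl
    simp [hl.1, hl.2.1, hl.2.2.1, al_zero]

lemma al_add (hn : 0 < n) {φ : Matrix (Fin n) (Fin n) ℂ → Matrix (Fin n) (Fin n) ℂ}
    (hφ : Good φ) {i j k : Fin n} (hij : i ≠ j) (hik : i ≠ k) (hjk : j ≠ k) (c t : ℂ) :
    al φ i k (c + t) = al φ i k c + al φ i k t := by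
  have h : transvection j k (-c) * transvection j k c = 1 := by
    rw [transvection_mul_transvection_same _ _ hjk]; simp
  have h1 := F_row_two hn (hφ.conj h) hij hik hjk 1 t
  simp only [al, F_conj φ h] at h1
  have e0 : transvection j k (-c) *ᵥ e i = e i := by
    ext l
    simp [transvection, e, Matrix.one_apply, Pi.single_apply, hik.symm]
  have e1 : (e i : Fin n → ℂ) ᵥ* transvection j k c = e i := by
    ext l
    simp [transvection, Matrix.vecMul_add, e, hij.symm]
  have e2 : (e j : Fin n → ℂ) ᵥ* transvection j k c = e j + c • e k := by
    ext l
    simp [transvection, Matrix.vecMul_add, e, Matrix.single_apply, Pi.single_apply, eq_comm]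
  have e3 : (e k : Fin n → ℂ) ᵥ* transvection j k c = e k := by
    ext l
    simp [transvection, Matrix.vecMul_add, e, hjk]
  rw [e0] at h1
  simp only [Matrix.add_vecMul, Matrix.smul_vecMul, e1, e2, e3, one_smul] at h1
  have a1 := F_row_two hn hφ hij hik hjk 1 (c + t)
  have a2 := F_row_two hn hφ hij hik hjk 1 c
  rw [one_smul] at a1 a2
  have r1 : e i + (e j + c • e k) + t • e k = e i + e j + (c + t) • e k := by module
  have r2 : e i + (e j + c • e k) = e i + e j + c • e k := by module
  rw [r1, r2, a1, a2] at h1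
  have a3 : al φ i k t = F φ (e i) (e i + t • e k) - F φ (e i) (e i) := rfl
  rw [← a3] at h1
  have := congrArg (fun Z => Z - F φ (e i) (e i) - al φ i j 1) h1
  have l1 : F φ (e i) (e i) + al φ i j 1 + al φ i k (c + t) - F φ (e i) (e i) - al φ i j 1
    = al φ i k (c + t) := by abel
  rw [l1] at this
  rw [this]
  abel

end GLss

open Matrix

namespace GLss
variable {n : ℕ}

lemma exists_frame (i : Fin n) (f : Fin n → ℂ) (hf : f i = 1) :
    ∃ P R : Matrix (Fin n) (Fin n) ℂ, P * R = 1 ∧ (fun k => P k i) = e i ∧ R i = f := by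
  let R : Matrix (Fin n) (Fin n) ℂ := 1 + vecMulVec (e i) (f - e i)
  let P : Matrix (Fin n) (Fin n) ℂ := 1 - vecMulVec (e i) (f - e i)
  have h : P * R = 1 := by
    have h0 : vecMulVec (e i) (f - e i) * vecMulVec (e i) (f - e i) = 0 := by
      rw [Matrix.vecMulVec_mul_vecMulVec]
      simp [e, hf]
    simp only [P, R, Matrix.sub_mul, Matrix.mul_add, Matrix.mul_one, Matrix.one_mul, h0]
    simp
  refine ⟨P, R, h, ?_, ?_⟩
  · funext k
    simp [P, e, vecMulVec_apply, hf, Matrix.one_apply, Pi.single_apply]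
  · funext k
    simp [R, e, vecMulVec_apply, Matrix.one_apply, Pi.single_apply, eq_comm]

lemma dom_rank_one (i : Fin n) (f : Fin n → ℂ) (hf : f i = 1) :
    Dom (1 + vecMulVec (e i) f) := by
  obtain ⟨P, R, h, h1, h2⟩ := exists_frame i f hf
  have e1 : vecMulVec (e i) f = P * diagonal (e i) * R := by
    rw [mul_diag_mul, Finset.sum_eq_single i]
    · simp [h1, h2]
    · intro j _ hj; simp [Pi.single_eq_of_ne hj]
    · simp
  rw [e1, ← one_add_diag h]
  apply dom_mk h
  intro j
  by_cases hj : j = i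
  · subst hj; norm_num
  · simp [Pi.single_eq_of_ne hj]

lemma al_cont {φ : Matrix (Fin n) (Fin n) ℂ → Matrix (Fin n) (Fin n) ℂ}
    (hφ : Good φ) {i k : Fin n} (hik : i ≠ k) : Continuous (al φ i k) := by
  have : Continuous (fun s : ℂ => φ (1 + vecMulVec (e i) (e i + s • e k))) := by
    refine hφ.cont.comp_continuous ?_ ?_
    · refine continuous_const.add (Continuous.matrix_vecMulVec continuous_const ?_)
      fun_prop
    · intro s
      exact dom_rank_one i _ (by simp [hik])
  exact (this.sub continuous_const).sub continuous_const

lemma exists_third (hn : 3 ≤ n) (i k : Fin n) : ∃ j : Fin n, i ≠ j ∧ j ≠ k := by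
  have : ∃ j ∈ (Finset.univ : Finset (Fin n)), j ∉ ({i, k} : Finset (Fin n)) := by
    apply Finset.exists_mem_notMem_of_card_lt_card
    refine (Finset.card_le_two).trans_lt ?_
    simp; omega
  obtain ⟨j, _, hj⟩ := this
  simp only [Finset.mem_insert, Finset.mem_singleton, not_or] at hj
  exact ⟨j, Ne.symm hj.1, hj.2⟩

lemma al_add' (hn : 3 ≤ n) {φ : Matrix (Fin n) (Fin n) ℂ → Matrix (Fin n) (Fin n) ℂ}
    (hφ : Good φ) {i k : Fin n} (hik : i ≠ k) (c t : ℂ) :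
    al φ i k (c + t) = al φ i k c + al φ i k t := by
  obtain ⟨j, h1, h2⟩ := exists_third hn i k
  exact al_add (by omega) hφ h1 hik h2 c t

lemma al_real (hn : 3 ≤ n) {φ : Matrix (Fin n) (Fin n) ℂ → Matrix (Fin n) (Fin n) ℂ}
    (hφ : Good φ) {i k : Fin n} (hik : i ≠ k) (r : ℝ) (c : ℂ) :
    al φ i k ((r : ℂ) * c) = (r : ℂ) • al φ i k c := by
  let g : ℂ →+ Matrix (Fin n) (Fin n) ℂ :=
    { toFun := al φ i k, map_zero' := al_zero φ i k, map_add' := al_add' hn hφ hik }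
  have := map_real_smul g (al_cont hφ hik) r c
  simpa [g] using this

lemma al_neg (hn : 3 ≤ n) {φ : Matrix (Fin n) (Fin n) ℂ → Matrix (Fin n) (Fin n) ℂ}
    (hφ : Good φ) {i k : Fin n} (hik : i ≠ k) (c : ℂ) : al φ i k (-c) = - al φ i k c := by
  have := al_real hn hφ hik (-1) c
  simpa using this

lemma al_transpose (hn : 3 ≤ n) {φ : Matrix (Fin n) (Fin n) ℂ → Matrix (Fin n) (Fin n) ℂ}
    (hφ : Good φ) {i k : Fin n} (hik : i ≠ k) (s : ℂ) :
    al (fun X => φ Xᵀ) k i s = al φ i k s := by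
  have h1 := al_eq (by omega) hφ hik (-s)
  rw [al_neg hn hφ hik] at h1
  rw [al, F_transpose, F_transpose, ← neg_neg (al φ i k s), h1]
  simp

lemma F_col_two (hn : 3 ≤ n) {φ : Matrix (Fin n) (Fin n) ℂ → Matrix (Fin n) (Fin n) ℂ}
    (hφ : Good φ) {i j k : Fin n} (hij : i ≠ j) (hik : i ≠ k) (hjk : j ≠ k) (s t : ℂ) :
    F φ (e k + s • e i + t • e j) (e k) = F φ (e k) (e k) + al φ i k s + al φ j k t := by
  have := F_row_two (by omega) hφ.transpose hik.symm hjk.symm hij s t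
  rwa [F_transpose, F_transpose, al_transpose hn hφ hik, al_transpose hn hφ hjk] at this

/-- An upper triangular three dimensional frame. -/
lemma three (hn : 3 ≤ n) {φ : Matrix (Fin n) (Fin n) ℂ → Matrix (Fin n) (Fin n) ℂ}
    (hφ : Good φ) {i j k : Fin n} (hij : i ≠ j) (hik : i ≠ k) (hjk : j ≠ k) (l2 l3 m a b : ℂ)
    (ha : 1 + a ≠ 0) (hb : 1 + b ≠ 0) (Y : Matrix (Fin n) (Fin n) ℂ)
    (hY : Y = a • vecMulVec (e i) (e i + l2 • e j + l3 • e k)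
      + b • vecMulVec (e j - l2 • e i) (e j + m • e k)) :
    Dom (1 + Y) ∧ φ (1 + Y) = 1 + a • F φ (e i) (e i + l2 • e j + l3 • e k)
      + b • (F φ (e i) (e i) + F φ (e j) (e j) + F φ (e k) (e k)
        - F φ (e i) (e i + l2 • e j + l3 • e k)
        - F φ (e k + (l2 * m - l3) • e i + (-m) • e j) (e k)) := by
  let R : Matrix (Fin n) (Fin n) ℂ := 1 + single i j l2 + single i k l3 + single j k m
  let P : Matrix (Fin n) (Fin n) ℂ :=
    1 + single i j (-l2) + single i k (l2 * m - l3) + single j k (-m)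
  have h : P * R = 1 := by
    simp only [P, R, Matrix.add_mul, Matrix.mul_add, Matrix.mul_one, Matrix.one_mul,
      single_mul_single_same, single_mul_single_of_ne, hij.symm, hik.symm, hjk.symm, ne_eq,
      not_false_eq_true, hjk, hij, hik]
    ext p q
    simp only [Matrix.add_apply, Matrix.single_apply, Matrix.one_apply, Matrix.zero_apply]
    split_ifs <;> ring
  have c1 : (fun p => P p i) = e i := by
    funext p
    simp [P, e, Matrix.one_apply, Matrix.single_apply, Pi.single_apply, hij.symm, hik.symm]
  have c2 : (fun p => P p j) = e j - l2 • e i := by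
    funext p
    simp only [P, e, Matrix.add_apply, Matrix.one_apply, Matrix.single_apply, Pi.single_apply,
      hjk.symm, Pi.sub_apply, Pi.smul_apply, smul_eq_mul, @eq_comm _ i p, @eq_comm _ j p]
    split_ifs <;> simp_all
  have c3 : (fun p => P p k) = e k + (l2 * m - l3) • e i + (-m) • e j := by
    funext p
    simp only [P, e, Matrix.add_apply, Matrix.one_apply, Matrix.single_apply, Pi.single_apply,
      hjk, Pi.add_apply, Pi.smul_apply, smul_eq_mul, @eq_comm _ i p, @eq_comm _ j p]
    split_ifs <;> simp_all
  have r1 : R i = e i + l2 • e j + l3 • e k := by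
    funext p
    simp only [R, e, Matrix.add_apply, Matrix.one_apply, Matrix.single_apply, Pi.single_apply,
      Pi.add_apply, Pi.smul_apply, smul_eq_mul, @eq_comm _ i p, @eq_comm _ j p, @eq_comm _ k p]
    split_ifs <;> simp_all
  have r2 : R j = e j + m • e k := by
    funext p
    simp only [R, e, Matrix.add_apply, Matrix.one_apply, Matrix.single_apply, Pi.single_apply,
      Pi.add_apply, Pi.smul_apply, smul_eq_mul, @eq_comm _ j p, @eq_comm _ k p]
    split_ifs <;> simp_all
  have r3 : R k = e k := by
    funext p
    simp only [R, e, Matrix.add_apply, Matrix.one_apply, Matrix.single_apply, Pi.single_apply,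
      @eq_comm _ k p]
    split_ifs <;> simp_all
  have cl : ∀ l, l ≠ i → l ≠ j → l ≠ k → (fun p => P p l) = e l := by
    intro l h1 h2 h3
    funext p
    simp [P, e, Matrix.one_apply, Matrix.single_apply, Pi.single_apply, h1.symm, h2.symm, h3.symm]
  have rl : ∀ l, l ≠ i → l ≠ j → l ≠ k → R l = e l := by
    intro l h1 h2 h3
    funext p
    simp [R, e, Matrix.one_apply, Matrix.single_apply, Pi.single_apply, h1.symm, h2.symm, eq_comm]
  let c : Fin n → ℂ := a • e i + b • e j
  have ci : c i = a := by simp [c, hij]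
  have cj : c j = b := by simp [c, hij.symm]
  have cl0 : ∀ l, l ≠ i → l ≠ j → c l = 0 := by
    intro l h1 h2
    simp [c, h1, h2]
  have hc : ∀ l, 1 + c l ≠ 0 := by
    intro l
    by_cases h1 : l = i
    · rw [h1, ci]; exact ha
    by_cases h2 : l = j
    · rw [h2, cj]; exact hb
    rw [cl0 l h1 h2]; simp
  have hsum : ∀ G : Fin n → Matrix (Fin n) (Fin n) ℂ, ∑ l, c l • G l = a • G i + b • G j := by
    intro G
    rw [← Finset.add_sum_erase _ _ (Finset.mem_univ i),
      ← Finset.add_sum_erase _ _ (Finset.mem_erase.mpr ⟨hij.symm, Finset.mem_univ j⟩),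
      Finset.sum_eq_zero, ci, cj, add_zero]
    intro l hl
    simp only [Finset.mem_erase] at hl
    rw [cl0 l hl.2.1 hl.1, zero_smul]
  have hYe : Y = P * diagonal c * R := by
    rw [mul_diag_mul, hsum, c1, c2, r1, r2, hY]
  have hfr := frame (by omega) hφ h
  have hfr1 := (frame (by omega) hφ (Matrix.one_mul (1 : Matrix (Fin n) (Fin n) ℂ))).1
  have hlin := frame_lin (by omega) hφ h c hc
  constructor
  · rw [hYe, ← one_add_diag h]
    exact dom_mk h hc
  · rw [hYe, hlin, hsum, c1, c2, r1, r2, ← add_assoc]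
    congr 2
    have h1 : ∀ l, (fun p => (1 : Matrix (Fin n) (Fin n) ℂ) p l) = e l := by
      intro l; funext p; simp [e, Matrix.one_apply, Pi.single_apply]
    have h2 : ∀ l, (1 : Matrix (Fin n) (Fin n) ℂ) l = e l := by
      intro l; funext p; simp [e, Matrix.one_apply, Pi.single_apply, eq_comm]
    have h12 : ∀ l, F φ (fun p => (1 : Matrix (Fin n) (Fin n) ℂ) p l)
        ((1 : Matrix (Fin n) (Fin n) ℂ) l) = F φ (e l) (e l) := by
      intro l; rw [h1, h2]
    simp only [h12] at hfr1
    have hs := hfr.1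
    have hj' : j ∈ Finset.univ.erase i := Finset.mem_erase.mpr ⟨hij.symm, Finset.mem_univ _⟩
    have hk' : k ∈ (Finset.univ.erase i).erase j :=
      Finset.mem_erase.mpr ⟨hjk.symm, Finset.mem_erase.mpr ⟨hik.symm, Finset.mem_univ _⟩⟩
    rw [← Finset.add_sum_erase _ _ (Finset.mem_univ i), ← Finset.add_sum_erase _ _ hj',
      ← Finset.add_sum_erase _ _ hk', c1, c2, c3, r1, r2, r3,
      Finset.sum_congr rfl (fun l hl => by
        simp only [Finset.mem_erase] at hl
        rw [cl l hl.2.2.1 hl.2.1 hl.1, rl l hl.2.2.1 hl.2.1 hl.1])] at hs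
    rw [← Finset.add_sum_erase _ _ (Finset.mem_univ i), ← Finset.add_sum_erase _ _ hj',
      ← Finset.add_sum_erase _ _ hk', ← hs] at hfr1
    rw [← sub_eq_zero] at hfr1 ⊢
    rw [← neg_eq_zero, ← hfr1]
    abel

lemma al_I (hn : 3 ≤ n) {φ : Matrix (Fin n) (Fin n) ℂ → Matrix (Fin n) (Fin n) ℂ}
    (hφ : Good φ) {i k : Fin n} (hik : i ≠ k) :
    al φ i k Complex.I = Complex.I • al φ i k 1 := by
  obtain ⟨j, hij, hjk⟩ := exists_third hn i k
  let I := Complex.I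
  have hI : I * I = -1 := Complex.I_mul_I
  let A : Matrix (Fin n) (Fin n) ℂ := (1 + I) • vecMulVec (e i) (e i) + vecMulVec (e j) (e j)
  let B : Matrix (Fin n) (Fin n) ℂ := vecMulVec (e i) (e j) + vecMulVec (e j) (e k)
  let K0 : Matrix (Fin n) (Fin n) ℂ := I • al φ i k (-(1 + I) / 2) - al φ i k ((1 - I) / 2)
  let K1 : Matrix (Fin n) (Fin n) ℂ := I • al φ i j (-I) - al φ j k (-1)
  let K2 : Matrix (Fin n) (Fin n) ℂ :=
    (1 + I) • F φ (e i) (e i) + F φ (e j) (e j)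
  have key : ∀ ε : ℝ, ε ≠ 0 → Dom (1 + ((ε : ℂ) • B + (ε : ℂ) ^ 2 • A)) ∧
      φ (1 + ((ε : ℂ) • B + (ε : ℂ) ^ 2 • A)) = 1 + K0 + (ε : ℂ) • K1 + (ε : ℂ) ^ 2 • K2 := by
    intro ε hε
    have hε' : (ε : ℂ) ≠ 0 := by exact_mod_cast hε
    have ha : 1 + (1 + I) * (ε : ℂ) ^ 2 ≠ 0 := by
      intro h0
      have h2 : ((ε : ℂ) ^ 2) = ((ε ^ 2 : ℝ) : ℂ) := by push_cast; rfl
      have h3 : 0 ≤ ε ^ 2 := sq_nonneg ε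
      rw [h2] at h0
      generalize ε ^ 2 = r at h0 h3
      have := congrArg Complex.re h0
      simp [I] at this
      linarith
    have hb : 1 + (ε : ℂ) ^ 2 ≠ 0 := by
      have : (1 + ε ^ 2 : ℝ) ≠ 0 := by positivity
      exact_mod_cast this
    obtain ⟨h1, h2⟩ := three hn hφ hij hik hjk (((ε⁻¹ : ℝ) : ℂ) * (-I))
      ((((ε⁻¹) ^ 2 : ℝ) : ℂ) * (-(1 + I) / 2)) (ε⁻¹ : ℂ) ((1 + I) * (ε : ℂ) ^ 2) ((ε : ℂ) ^ 2)
      ha hb ((ε : ℂ) • B + (ε : ℂ) ^ 2 • A) (by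
        simp only [A, B, vecMulVec_add, sub_vecMulVec, Matrix.smul_vecMulVec,
          Matrix.vecMulVec_smul]
        push_cast
        match_scalars <;> field_simp <;> first | ring1 | linear_combination (-1 : ℂ) * hI | linear_combination hI | linear_combination (-1/2 : ℂ) * hI | linear_combination (1/2 : ℂ) * hI)
    refine ⟨h1, ?_⟩
    rw [h2, F_row_two (by omega) hφ hij hik hjk, F_col_two hn hφ hij hik hjk]
    have q1 : (((ε⁻¹ : ℝ) : ℂ) * (-I)) * (ε⁻¹ : ℂ) - ((((ε⁻¹) ^ 2 : ℝ) : ℂ) * (-(1 + I) / 2))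
        = (((ε⁻¹) ^ 2 : ℝ) : ℂ) * ((1 - I) / 2) := by
      push_cast; ring
    have q2 : -(ε⁻¹ : ℂ) = ((ε⁻¹ : ℝ) : ℂ) * (-1) := by push_cast; ring
    rw [q1, q2, al_real hn hφ hij, al_real hn hφ hik, al_real hn hφ hik, al_real hn hφ hjk]
    simp only [K0, K1, K2]
    push_cast
    match_scalars <;> field_simp <;> ring
  have hφ1 : φ 1 = 1 := by
    have := frame_lin (by omega) hφ (Matrix.one_mul (1 : Matrix (Fin n) (Fin n) ℂ)) 0 (by simp)
    simpa using this
  have hd1 : Dom (1 : Matrix (Fin n) (Fin n) ℂ) := by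
    have := dom_mk (Matrix.one_mul (1 : Matrix (Fin n) (Fin n) ℂ)) (d := fun _ => 1) (by simp)
    simpa using this
  have hε0 : Filter.Tendsto (fun ε : ℝ => (ε : ℂ)) (nhdsWithin 0 {0}ᶜ) (nhds 0) := by
    have : Filter.Tendsto (fun ε : ℝ => (ε : ℂ)) (nhds 0) (nhds ((0 : ℝ) : ℂ)) :=
      Complex.continuous_ofReal.tendsto 0
    simpa using this.mono_left nhdsWithin_le_nhds
  have t1 : Filter.Tendsto (fun ε : ℝ => 1 + ((ε : ℂ) • B + (ε : ℂ) ^ 2 • A))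
      (nhdsWithin 0 {0}ᶜ) (nhdsWithin 1 {X | Dom X}) := by
    rw [tendsto_nhdsWithin_iff]
    constructor
    · have := tendsto_const_nhds (x := (1 : Matrix (Fin n) (Fin n) ℂ)).add
        ((hε0.smul_const B).add ((hε0.pow 2).smul_const A))
      simpa using this
    · filter_upwards [self_mem_nhdsWithin] with ε hε
      exact (key ε hε).1
  have t2 := (hφ.cont 1 hd1).tendsto.comp t1
  rw [hφ1] at t2
  have t3 : Filter.Tendsto (fun ε : ℝ => 1 + K0 + (ε : ℂ) • K1 + (ε : ℂ) ^ 2 • K2)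
      (nhdsWithin 0 {0}ᶜ) (nhds (1 + K0)) := by
    have := (tendsto_const_nhds (x := 1 + K0)).add
        ((hε0.smul_const K1).add ((hε0.pow 2).smul_const K2))
    simpa [add_assoc] using this
  have t4 : (1 : Matrix (Fin n) (Fin n) ℂ) = 1 + K0 := by
    refine tendsto_nhds_unique t2 (t3.congr' ?_)
    filter_upwards [self_mem_nhdsWithin] with ε hε
    exact (key ε hε).2.symm
  have hK0 : K0 = 0 := by simpa using t4.symm
  have s1 : -(1 + I) / 2 = ((-1/2 : ℝ) : ℂ) * 1 + ((-1/2 : ℝ) : ℂ) * I := by push_cast; ring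
  have s2 : (1 - I) / 2 = ((1/2 : ℝ) : ℂ) * 1 + ((-1/2 : ℝ) : ℂ) * I := by push_cast; ring
  simp only [K0] at hK0
  rw [s1, s2, al_add' hn hφ hik, al_add' hn hφ hik, al_real hn hφ hik, al_real hn hφ hik,
    al_real hn hφ hik] at hK0
  have h5 : (1 + I) • (I • (((-1/2 : ℝ) : ℂ) • al φ i k 1 + ((-1/2 : ℝ) : ℂ) • al φ i k I)
      - (((1/2 : ℝ) : ℂ) • al φ i k 1 + ((-1/2 : ℝ) : ℂ) • al φ i k I)) = 0 := by
    rw [hK0, smul_zero]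
  rw [← sub_eq_zero]
  rw [← h5]
  push_cast
  match_scalars
  · linear_combination (1/2 : ℂ) * hI
  · linear_combination (1/2 : ℂ) * hI

lemma al_lin (hn : 3 ≤ n) {φ : Matrix (Fin n) (Fin n) ℂ → Matrix (Fin n) (Fin n) ℂ}
    (hφ : Good φ) {i k : Fin n} (hik : i ≠ k) (s : ℂ) :
    al φ i k s = s • al φ i k 1 := by
  have h : s = (s.re : ℂ) * 1 + (s.im : ℂ) * Complex.I := by
    rw [mul_one]; exact (Complex.re_add_im s).symm
  conv_lhs => rw [h]
  rw [al_add' hn hφ hik, al_real hn hφ hik, al_real hn hφ hik, al_I hn hφ hik, smul_smul,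
    ← add_smul]
  conv_rhs => rw [h]
  rw [mul_one]

end GLss

open Matrix
namespace GLss
variable {n : ℕ}

/-- Candidate images of the matrix units. -/
noncomputable def Em (φ : Matrix (Fin n) (Fin n) ℂ → Matrix (Fin n) (Fin n) ℂ) (i j : Fin n) :
    Matrix (Fin n) (Fin n) ℂ := if i = j then F φ (e i) (e i) else al φ i j 1

lemma F_Em (hn : 3 ≤ n) {φ : Matrix (Fin n) (Fin n) ℂ → Matrix (Fin n) (Fin n) ℂ}
    (hφ : Good φ) (i : Fin n) (f : Fin n → ℂ) (hf : f i = 1) :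
    F φ (e i) f = ∑ j, f j • Em φ i j := by
  rw [F_row (by omega) hφ i f hf, ← Finset.add_sum_erase _ _ (Finset.mem_univ i)]
  congr 1
  · simp [Em, hf]
  · refine Finset.sum_congr rfl fun j hj => ?_
    have hij : i ≠ j := fun h => by simp [h] at hj
    rw [al_lin hn hφ hij, Em, if_neg hij]

lemma F_lin (hn : 3 ≤ n) {φ : Matrix (Fin n) (Fin n) ℂ → Matrix (Fin n) (Fin n) ℂ}
    (hφ : Good φ) (i : Fin n) (f : Fin n → ℂ) (hf : f i ≠ 0) :
    ∃ Λ : (Fin n → ℂ) →ₗ[ℂ] Matrix (Fin n) (Fin n) ℂ, ∀ x, f ⬝ᵥ x = 1 → F φ x f = Λ x := by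
  let V : Matrix (Fin n) (Fin n) ℂ := vecMulVec (e i) (f - e i)
  let R : Matrix (Fin n) (Fin n) ℂ := 1 + V
  let P : Matrix (Fin n) (Fin n) ℂ := 1 - (f i)⁻¹ • V
  have hV : V * V = (f i - 1) • V := by
    simp only [V, vecMulVec_mul_vecMulVec]
    simp [e, sub_dotProduct, smul_vecMulVec]
  have h : P * R = 1 := by
    simp only [P, R, Matrix.mul_add, Matrix.sub_mul, Matrix.one_mul, Matrix.mul_one,
      Matrix.smul_mul, hV]
    match_scalars
    · ring
    · field_simp; ring
  have hr : (e i) ᵥ* R = f := by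
    simp only [R, V, vecMul_add, vecMul_one, vecMul_vecMulVec]
    simp [e]
  have hri : ∀ x, (R *ᵥ x) i = f ⬝ᵥ x := by
    intro x
    have : e i ⬝ᵥ (R *ᵥ x) = (e i ᵥ* R) ⬝ᵥ x := dotProduct_mulVec _ _ _
    rw [hr] at this
    simpa [e] using this
  have hψ := (hφ.conj h).transpose
  let φ' : Matrix (Fin n) (Fin n) ℂ → Matrix (Fin n) (Fin n) ℂ := fun X => φ (P * Xᵀ * R)
  let Λ : (Fin n → ℂ) →ₗ[ℂ] Matrix (Fin n) (Fin n) ℂ :=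
    { toFun := fun x => ∑ j, (R *ᵥ x) j • Em φ' i j
      map_add' := by
        intro x y
        simp [mulVec_add, add_smul, Finset.sum_add_distrib]
      map_smul' := by
        intro c x
        simp [mulVec_smul, Finset.smul_sum, smul_smul] }
  refine ⟨Λ, fun x hx => ?_⟩
  have h1 := F_Em hn hψ i (R *ᵥ x) (by rw [hri, hx])
  change _ = ∑ j, (R *ᵥ x) j • Em φ' i j
  rw [← h1, F_transpose (φ := fun X => φ (P * X * R)), F_conj φ h, mulVec_mulVec, h, one_mulVec, hr]

/-- The linear extension. -/
noncomputable def Lmap (φ : Matrix (Fin n) (Fin n) ℂ → Matrix (Fin n) (Fin n) ℂ) :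
    Matrix (Fin n) (Fin n) ℂ →ₗ[ℂ] Matrix (Fin n) (Fin n) ℂ where
  toFun X := ∑ i, ∑ j, X i j • Em φ i j
  map_add' X Y := by simp [add_smul, Finset.sum_add_distrib]
  map_smul' c X := by simp [Finset.smul_sum, smul_smul]

lemma F_L (hn : 3 ≤ n) {φ : Matrix (Fin n) (Fin n) ℂ → Matrix (Fin n) (Fin n) ℂ}
    (hφ : Good φ) (f x : Fin n → ℂ) (hf : ∀ i, f i ≠ 0) (hx : f ⬝ᵥ x = 1) :
    F φ x f = Lmap φ (vecMulVec x f) := by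
  obtain ⟨Λ, hΛ⟩ := F_lin hn hφ ⟨0, by omega⟩ f (hf _)
  have h1 : ∀ i, Λ (e i) = ∑ j, f j • Em φ i j := by
    intro i
    have h2 := hΛ ((f i)⁻¹ • e i) (by simp [e, hf i])
    rw [F_scale, F_Em hn hφ i _ (by simp [hf i]), map_smul] at h2
    have h3 : Λ (e i) = f i • ((f i)⁻¹ • Λ (e i)) := by rw [smul_smul, mul_inv_cancel₀ (hf i), one_smul]
    rw [h3, ← h2, Finset.smul_sum]
    refine Finset.sum_congr rfl fun j _ => ?_
    rw [smul_smul, Pi.smul_apply, smul_eq_mul, mul_inv_cancel_left₀ (hf i)]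
  have h4 : x = ∑ i, x i • e i := by
    funext p
    simp [e, Pi.single_apply]
  rw [hΛ x hx]
  conv_lhs => rw [h4]
  rw [map_sum]
  change _ = ∑ i, ∑ j, (vecMulVec x f) i j • Em φ i j
  refine Finset.sum_congr rfl fun i _ => ?_
  rw [map_smul, h1, Finset.smul_sum]
  refine Finset.sum_congr rfl fun j _ => ?_
  rw [smul_smul, vecMulVec_apply]

lemma phi_L_gen (hn : 3 ≤ n) {φ : Matrix (Fin n) (Fin n) ℂ → Matrix (Fin n) (Fin n) ℂ}
    (hφ : Good φ) {P R : Matrix (Fin n) (Fin n) ℂ} (h : P * R = 1) (hR : ∀ i j, R i j ≠ 0)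
    {d : Fin n → ℂ} (hd : ∀ i, d i ≠ 0) :
    φ (P * diagonal d * R) = Lmap φ (P * diagonal d * R) := by
  rw [(frame (by omega) hφ h).2 d hd, mul_diag_mul, map_sum]
  refine Finset.sum_congr rfl fun i _ => ?_
  rw [map_smul, F_L hn hφ _ _ (hR i)]
  have h2 : R * P = 1 := mul_eq_one_comm.mp h
  have := congrFun (congrFun h2 i) i
  simpa [Matrix.mul_apply, dotProduct] using this

lemma base_point : ((1 : Matrix (Fin n) (Fin n) ℂ) + vecMulVec 1 1).det ≠ 0 := by
  have hJ : (vecMulVec 1 1 : Matrix (Fin n) (Fin n) ℂ) * vecMulVec 1 1 = (n : ℂ) • vecMulVec 1 1 := by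
    rw [vecMulVec_mul_vecMulVec]
    ext i j
    simp [vecMulVec_apply]
  have hn : (n : ℂ) + 1 ≠ 0 := by exact_mod_cast Nat.succ_ne_zero n
  have : ((1 : Matrix (Fin n) (Fin n) ℂ) + vecMulVec 1 1) *
      (1 - ((n : ℂ) + 1)⁻¹ • vecMulVec 1 1) = 1 := by
    simp only [Matrix.mul_sub, Matrix.add_mul, Matrix.one_mul, Matrix.mul_one,
      Matrix.mul_smul, hJ]
    match_scalars
    · ring
    · field_simp; ring
  exact (Matrix.isUnit_det_of_right_inverse this).ne_zero

lemma phi_L (hn : 3 ≤ n) {φ : Matrix (Fin n) (Fin n) ℂ → Matrix (Fin n) (Fin n) ℂ}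
    (hφ : Good φ) {X : Matrix (Fin n) (Fin n) ℂ} (hX : Dom X) : φ X = Lmap φ X := by
  obtain ⟨P, R, d, h, hd, rfl⟩ := dom_iff.mp hX
  have hPR : P = R⁻¹ := (Matrix.inv_eq_left_inv h).symm
  subst hPR
  let S : Set (Matrix (Fin n) (Fin n) ℂ) := {A | A.det * ∏ i, ∏ j, A i j ≠ 0}
  have hcl : R ∈ closure S := by
    refine dense_ne (fun A : Matrix (Fin n) (Fin n) ℂ => A.det * ∏ i, ∏ j, A i j) ?_
      (1 + vecMulVec 1 1) ?_ R
    · intro p q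
      refine IsPoly.mul (IsPoly.det fun i j => ?_)
        (IsPoly.prod _ fun i => IsPoly.prod _ fun j => ?_) <;>
      · simpa using IsPoly.line (p i j) (q i j)
    · refine mul_ne_zero base_point ?_
      refine Finset.prod_ne_zero_iff.mpr fun i _ => Finset.prod_ne_zero_iff.mpr fun j _ => ?_
      by_cases hij : i = j
      · simp [hij, vecMulVec_apply]
      · simp [hij, vecMulVec_apply]
  rw [mem_closure_iff_nhdsWithin_neBot] at hcl
  have hu : IsUnit R := (Matrix.isUnit_iff_isUnit_det R).mpr (Matrix.isUnit_det_of_left_inverse h)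
  have hinv : ContinuousAt (fun A : Matrix (Fin n) (Fin n) ℂ => A⁻¹) R := by
    refine continuousAt_matrix_inv _ ?_
    exact NormedRing.inverse_continuousAt (R := ℂ) (Units.mk0 R.det (Matrix.isUnit_det_of_left_inverse h).ne_zero)
  have hc : ContinuousAt (fun A : Matrix (Fin n) (Fin n) ℂ => A⁻¹ * diagonal d * A) R :=
    (hinv.mul continuousAt_const).mul continuousAt_id
  have hgood : ∀ A ∈ S, A⁻¹ * A = 1 ∧ ∀ i j, A i j ≠ 0 := by
    intro A hA
    have h1 := left_ne_zero_of_mul hA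
    have h2 := right_ne_zero_of_mul hA
    refine ⟨Matrix.nonsing_inv_mul _ (isUnit_iff_ne_zero.mpr h1), fun i j => ?_⟩
    exact Finset.prod_ne_zero_iff.mp (Finset.prod_ne_zero_iff.mp h2 i (Finset.mem_univ _)) j
      (Finset.mem_univ _)
  have t0 : Filter.Tendsto (fun A : Matrix (Fin n) (Fin n) ℂ => A⁻¹ * diagonal d * A)
      (nhdsWithin R S) (nhds (R⁻¹ * diagonal d * R)) := hc.tendsto.mono_left nhdsWithin_le_nhds
  have t1 : Filter.Tendsto (fun A : Matrix (Fin n) (Fin n) ℂ => A⁻¹ * diagonal d * A)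
      (nhdsWithin R S) (nhdsWithin (R⁻¹ * diagonal d * R) {X | Dom X}) := by
    rw [tendsto_nhdsWithin_iff]
    refine ⟨t0, ?_⟩
    filter_upwards [self_mem_nhdsWithin] with A hA
    exact dom_mk (hgood A hA).1 hd
  have t2 := (hφ.cont _ hX).tendsto.comp t1
  have hL : Continuous (Lmap φ) := by
    change Continuous (fun X : Matrix (Fin n) (Fin n) ℂ => ∑ i, ∑ j, X i j • Em φ i j)
    fun_prop
  have t3 := (hL.tendsto _).comp t0
  refine tendsto_nhds_unique t2 (t3.congr' ?_)
  filter_upwards [self_mem_nhdsWithin] with A hA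
  exact (phi_L_gen hn hφ (hgood A hA).1 (hgood A hA).2 hd).symm

end GLss

open Matrix
namespace GLss
variable {n : ℕ}

lemma torusL (hn : 3 ≤ n) {φ : Matrix (Fin n) (Fin n) ℂ → Matrix (Fin n) (Fin n) ℂ}
    (hφ : Good φ) {P R : Matrix (Fin n) (Fin n) ℂ} (h : P * R = 1) :
    ∃ Q S : Matrix (Fin n) (Fin n) ℂ, Q * S = 1 ∧
      ∀ d : Fin n → ℂ, Lmap φ (P * diagonal d * R) = Q * diagonal d * S := by
  obtain ⟨Q, S, hQ, hT⟩ := torus (by omega) hφ h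
  have hT' : ∀ d : Fin n → ℂ, (∀ i, d i ≠ 0) →
      Lmap φ (P * diagonal d * R) = Q * diagonal d * S := by
    intro d hd
    rw [← phi_L hn hφ (dom_mk h hd), hT d hd]
  refine ⟨Q, S, hQ, fun d => ?_⟩
  classical
  obtain ⟨c, hc⟩ := Infinite.exists_notMem_finset (insert 0 (Finset.univ.image fun i => -d i))
  simp only [Finset.mem_insert, Finset.mem_image, Finset.mem_univ, true_and, not_or,
    not_exists] at hc
  have h1 := hT' (fun i => d i + c) (fun i h0 => hc.2 i (by linear_combination -h0))
  have h2 := hT' (fun _ => c) (fun _ => hc.1)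
  have h3 : diagonal d = diagonal (fun i => d i + c) - diagonal (fun _ => c) := by
    rw [diagonal_sub]; congr 1; funext i; ring
  rw [h3, Matrix.mul_sub, Matrix.sub_mul, map_sub, h1, h2, Matrix.mul_sub, Matrix.sub_mul]

lemma sq_herm (hn : 3 ≤ n) {φ : Matrix (Fin n) (Fin n) ℂ → Matrix (Fin n) (Fin n) ℂ}
    (hφ : Good φ) {H : Matrix (Fin n) (Fin n) ℂ} (hH : H.IsHermitian) :
    Lmap φ (H * H) = Lmap φ H * Lmap φ H := by
  obtain ⟨P, R, d, h, hd⟩ : ∃ P R : Matrix (Fin n) (Fin n) ℂ, ∃ d : Fin n → ℂ,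
      P * R = 1 ∧ H = P * diagonal d * R := by
    refine ⟨hH.eigenvectorUnitary, star (hH.eigenvectorUnitary : Matrix (Fin n) (Fin n) ℂ),
      (fun i => (hH.eigenvalues i : ℂ)), ?_, ?_⟩
    · exact Unitary.coe_mul_star_self _
    · exact hH.spectral_theorem
  obtain ⟨Q, S, hQ, hT⟩ := torusL hn hφ h
  have hc : ∀ (A B : Matrix (Fin n) (Fin n) ℂ), A * B = 1 →
      (A * diagonal d * B) * (A * diagonal d * B) = A * diagonal (fun i => d i * d i) * B := by
    intro A B hAB
    have hBA : B * A = 1 := mul_eq_one_comm.mp hAB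
    calc (A * diagonal d * B) * (A * diagonal d * B)
        = A * diagonal d * (B * A) * diagonal d * B := by simp only [Matrix.mul_assoc]
      _ = _ := by rw [hBA, Matrix.mul_one, Matrix.mul_assoc A, diagonal_mul_diagonal]
  rw [hd, hc P R h, hT, hT, hc Q S hQ]

lemma jordan_sq (hn : 3 ≤ n) {φ : Matrix (Fin n) (Fin n) ℂ → Matrix (Fin n) (Fin n) ℂ}
    (hφ : Good φ) (X : Matrix (Fin n) (Fin n) ℂ) :
    Lmap φ (X * X) = Lmap φ X * Lmap φ X := by
  obtain ⟨A, B, hA, hB, rfl⟩ : ∃ A B : Matrix (Fin n) (Fin n) ℂ, A.IsHermitian ∧ B.IsHermitian ∧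
      X = A + Complex.I • B :=
    ⟨realPart X, imaginaryPart X, (realPart X).2, (imaginaryPart X).2,
      (realPart_add_I_smul_imaginaryPart X).symm⟩
  have h1 := sq_herm hn hφ hA
  have h2 := sq_herm hn hφ hB
  have h3 := sq_herm hn hφ (hA.add hB)
  simp only [Matrix.add_mul, Matrix.mul_add, map_add, h1, h2] at h3
  have h4 : Lmap φ (A * B) = Lmap φ A * Lmap φ B + Lmap φ B * Lmap φ A - Lmap φ (B * A) := by
    rw [← sub_eq_zero] at h3 ⊢
    rw [← h3]; abel
  simp only [Matrix.add_mul, Matrix.mul_add, map_add, map_smul, Matrix.smul_mul, Matrix.mul_smul,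
    h1, h2, h4]
  module

lemma jordan (hn : 3 ≤ n) {φ : Matrix (Fin n) (Fin n) ℂ → Matrix (Fin n) (Fin n) ℂ}
    (hφ : Good φ) (X Y : Matrix (Fin n) (Fin n) ℂ) :
    Lmap φ (X * Y + Y * X) = Lmap φ X * Lmap φ Y + Lmap φ Y * Lmap φ X := by
  have h3 := jordan_sq hn hφ (X + Y)
  simp only [Matrix.add_mul, Matrix.mul_add, map_add, jordan_sq hn hφ X, jordan_sq hn hφ Y] at h3
  rw [map_add]
  rw [← sub_eq_zero] at h3 ⊢
  rw [← h3]; abel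

end GLss

open Matrix
namespace GLss
variable {n : ℕ}

/-- A linear Jordan map fixing the diagonal matrices. -/
structure JD (L : Matrix (Fin n) (Fin n) ℂ →ₗ[ℂ] Matrix (Fin n) (Fin n) ℂ) : Prop where
  jordan : ∀ X Y, L (X * Y + Y * X) = L X * L Y + L Y * L X
  diag : ∀ d, L (diagonal d) = diagonal d

variable {L : Matrix (Fin n) (Fin n) ℂ →ₗ[ℂ] Matrix (Fin n) (Fin n) ℂ}

lemma JD.unit (hL : JD L) (i : Fin n) : L (single i i 1) = single i i 1 := by
  rw [← diagonal_single]; exact hL.diag _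

lemma JD.supp1 (hL : JD L) {i j : Fin n} (hij : i ≠ j) (p q : Fin n)
    (h : L (single i j 1) p q ≠ 0) : (p = i ∧ q ≠ i) ∨ (p ≠ i ∧ q = i) := by
  have h1 := hL.jordan (single i i 1) (single i j 1)
  rw [hL.unit, single_mul_single_same, single_mul_single_of_ne _ _ _ _ hij.symm, add_zero,
    one_mul] at h1
  have h2 := congrFun (congrFun h1 p) q
  rw [← diagonal_single, Matrix.add_apply, diagonal_mul, mul_diagonal] at h2
  by_cases hp : p = i <;> by_cases hq : q = i
  · exfalso
    simp [hp, hq] at h2 h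
    exact h h2
  · exact Or.inl ⟨hp, hq⟩
  · exact Or.inr ⟨hp, hq⟩
  · simp [hp, hq] at h2
    exact absurd h2 h

lemma JD.supp2 (hL : JD L) {i j : Fin n} (hij : i ≠ j) (p q : Fin n)
    (h : L (single i j 1) p q ≠ 0) : (p = j ∧ q ≠ j) ∨ (p ≠ j ∧ q = j) := by
  have h1 := hL.jordan (single j j 1) (single i j 1)
  rw [hL.unit, single_mul_single_same, single_mul_single_of_ne _ _ _ _ hij.symm, zero_add,
    one_mul] at h1
  have h2 := congrFun (congrFun h1 p) q
  rw [← diagonal_single, Matrix.add_apply, diagonal_mul, mul_diagonal] at h2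
  by_cases hp : p = j <;> by_cases hq : q = j
  · exfalso
    simp [hp, hq] at h2 h
    exact h h2
  · exact Or.inl ⟨hp, hq⟩
  · exact Or.inr ⟨hp, hq⟩
  · simp [hp, hq] at h2
    exact absurd h2 h

lemma JD.form (hL : JD L) {i j : Fin n} (hij : i ≠ j) :
    L (single i j 1) = single i j (L (single i j 1) i j) + single j i (L (single i j 1) j i) := by
  ext p q
  by_cases h0 : L (single i j 1) p q = 0
  · by_cases h1 : i = p ∧ j = q
    · obtain ⟨rfl, rfl⟩ := h1
      simp [Matrix.single_apply, hij]
    by_cases h2 : j = p ∧ i = q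
    · obtain ⟨rfl, rfl⟩ := h2
      simp [Matrix.single_apply, hij.symm]
    simp [Matrix.single_apply, h1, h2, h0]
  · rcases hL.supp1 hij p q h0 with ⟨rfl, h1⟩ | ⟨h1, rfl⟩
    · rcases hL.supp2 hij p q h0 with ⟨h2, h3⟩ | ⟨h2, rfl⟩
      · exact absurd h2 hij
      · simp [Matrix.single_apply, hij]
    · rcases hL.supp2 hij p q h0 with ⟨rfl, h3⟩ | ⟨h2, h3⟩
      · simp [Matrix.single_apply, hij.symm]
      · exact absurd h3 hij

lemma JD.rel0 (hL : JD L) {i j : Fin n} (hij : i ≠ j) :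
    L (single i j 1) i j * L (single i j 1) j i = 0 := by
  have h1 := hL.jordan (single i j 1) (single i j 1)
  rw [single_mul_single_of_ne _ _ _ _ hij.symm, add_zero, map_zero] at h1
  have h2 := congrFun (congrFun h1 i) i
  rw [hL.form hij] at h2
  generalize L (single i j 1) i j = a at h2 ⊢
  generalize L (single i j 1) j i = b at h2 ⊢
  simp only [Matrix.add_mul, Matrix.mul_add, single_mul_single_same, ne_eq, hij.symm, hij,
    not_false_eq_true, single_mul_single_of_ne] at h2
  simp [Matrix.single_apply, hij.symm] at h2
  linear_combination (-1/2 : ℂ) * h2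

lemma JD.rel1 (hL : JD L) {i j : Fin n} (hij : i ≠ j) :
    L (single i j 1) i j * L (single j i 1) j i + L (single i j 1) j i * L (single j i 1) i j
      = 1 := by
  have h1 := hL.jordan (single i j 1) (single j i 1)
  rw [single_mul_single_same, single_mul_single_same, map_add, one_mul, hL.unit, hL.unit] at h1
  have h2 := congrFun (congrFun h1 i) i
  rw [hL.form hij, hL.form hij.symm] at h2
  generalize L (single i j 1) i j = a at h2 ⊢
  generalize L (single i j 1) j i = b at h2 ⊢
  generalize L (single j i 1) i j = c at h2 ⊢
  generalize L (single j i 1) j i = d at h2 ⊢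
  simp only [Matrix.add_mul, Matrix.mul_add, single_mul_single_same, ne_eq, hij.symm, hij,
    not_false_eq_true, single_mul_single_of_ne] at h2
  simp [Matrix.single_apply, hij.symm] at h2
  rw [h2]; ring

lemma JD.rel2 (hL : JD L) {i j k : Fin n} (hij : i ≠ j) (hik : i ≠ k) (hjk : j ≠ k) :
    L (single i k 1) i k = L (single i j 1) i j * L (single j k 1) j k := by
  have h1 := hL.jordan (single i j 1) (single j k 1)
  rw [single_mul_single_same, single_mul_single_of_ne _ _ _ _ hik.symm, add_zero, one_mul] at h1
  have h2 := congrFun (congrFun h1 i) k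
  rw [hL.form hij, hL.form hjk] at h2
  rw [h2]
  generalize L (single i j 1) i j = a
  generalize L (single i j 1) j i = b
  generalize L (single j k 1) j k = c
  generalize L (single j k 1) k j = d
  simp only [Matrix.add_mul, Matrix.mul_add, single_mul_single_same, ne_eq, hij.symm, hij,
    hik, hik.symm, hjk, hjk.symm, not_false_eq_true, single_mul_single_of_ne]
  simp [Matrix.single_apply, hik.symm]

lemma JD.rel3 (hL : JD L) {i j k : Fin n} (hij : i ≠ j) (hik : i ≠ k) (hjk : j ≠ k) :
    L (single i j 1) j i * L (single i k 1) i k = 0 := by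
  have h1 := hL.jordan (single i j 1) (single i k 1)
  rw [single_mul_single_of_ne _ _ _ _ hij.symm, single_mul_single_of_ne _ _ _ _ hik.symm, add_zero,
    map_zero] at h1
  have h2 := congrFun (congrFun h1 j) k
  rw [hL.form hij, hL.form hik] at h2
  generalize L (single i j 1) i j = a at h2 ⊢
  generalize L (single i j 1) j i = b at h2 ⊢
  generalize L (single i k 1) i k = c at h2 ⊢
  generalize L (single i k 1) k i = d at h2 ⊢
  simp only [Matrix.add_mul, Matrix.mul_add, single_mul_single_same, ne_eq, hij.symm, hij,
    hik, hik.symm, hjk, hjk.symm, not_false_eq_true, single_mul_single_of_ne] at h2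
  simp [Matrix.single_apply, hjk.symm] at h2
  simpa using h2

lemma JD.caseA (hL : JD L) {i j : Fin n} (hij : i ≠ j) (h : L (single i j 1) i j ≠ 0) :
    ∃ D : Fin n → ℂ, (∀ i, D i ≠ 0) ∧ ∀ X, L X = diagonal (fun i => (D i)⁻¹) * X * diagonal D := by
  have hb : ∀ k, i ≠ k → L (single i k 1) k i = 0 := by
    intro k hik
    by_cases hjk : j = k
    · subst hjk
      exact (mul_eq_zero.mp (hL.rel0 hij)).resolve_left h
    · exact (mul_eq_zero.mp (hL.rel3 hik hij (Ne.symm hjk))).resolve_right h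
  have h1 : ∀ k, i ≠ k → L (single i k 1) i k * L (single k i 1) k i = 1 := by
    intro k hik
    have := hL.rel1 hik
    rwa [hb k hik, zero_mul, add_zero] at this
  have ha : ∀ k, i ≠ k → L (single i k 1) i k ≠ 0 := fun k hik =>
    left_ne_zero_of_mul_eq_one (h1 k hik)
  let D : Fin n → ℂ := fun k => if i = k then 1 else L (single i k 1) i k
  have hD : ∀ k, D k ≠ 0 := by
    intro k
    by_cases hik : i = k
    · simp [D, hik]
    · simp only [D, if_neg hik]; exact ha k hik
  have hDi : D i = 1 := by simp [D]
  have hDk : ∀ k, i ≠ k → D k = L (single i k 1) i k := fun k hk => by simp [D, hk]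
  have hA : ∀ p q, p ≠ q → L (single p q 1) p q = (D p)⁻¹ * D q := by
    intro p q hpq
    rw [eq_inv_mul_iff_mul_eq₀ (hD p)]
    by_cases hp : i = p
    · subst hp
      rw [hDi, hDk q hpq, one_mul]
    by_cases hq : i = q
    · subst hq
      rw [hDi, hDk p hp, h1 p hp]
    rw [hDk p hp, hDk q hq, ← hL.rel2 hp hq hpq]
  have hB : ∀ p q, p ≠ q → L (single p q 1) q p = 0 := by
    intro p q hpq
    refine (mul_eq_zero.mp (hL.rel0 hpq)).resolve_left ?_
    rw [hA p q hpq]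
    exact mul_ne_zero (inv_ne_zero (hD p)) (hD q)
  have hS : ∀ p q, L (single p q 1) = single p q ((D p)⁻¹ * D q) := by
    intro p q
    by_cases hpq : p = q
    · subst hpq
      rw [hL.unit, inv_mul_cancel₀ (hD p)]
    · rw [hL.form hpq, hB p q hpq, hA p q hpq, single_zero, add_zero]
  refine ⟨D, hD, fun X => ?_⟩
  have hX : X = ∑ p, ∑ q, X p q • single p q (1 : ℂ) := by
    conv_lhs => rw [matrix_eq_sum_single X]
    simp [smul_single]
  conv_lhs => rw [hX]
  simp only [map_sum, map_smul, hS]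
  ext r s
  rw [mul_diagonal, diagonal_mul]
  simp [Matrix.sum_apply, Matrix.single_apply, ite_and]
  ring

lemma JD.trans (hL : JD L) :
    JD (L ∘ₗ (Matrix.transposeLinearEquiv (Fin n) (Fin n) ℂ ℂ).toLinearMap) := by
  constructor
  · intro X Y
    have := hL.jordan Xᵀ Yᵀ
    change L (X * Y + Y * X)ᵀ = L Xᵀ * L Yᵀ + L Yᵀ * L Xᵀ
    rw [← this, Matrix.transpose_add, Matrix.transpose_mul, Matrix.transpose_mul, add_comm]
  · intro d
    simp [hL.diag]

lemma JD.classify (hn : 3 ≤ n) (hL : JD L) :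
    ∃ D : Fin n → ℂ, (∀ i, D i ≠ 0) ∧
      ((∀ X, L X = diagonal (fun i => (D i)⁻¹) * X * diagonal D) ∨
       (∀ X, L X = diagonal (fun i => (D i)⁻¹) * Xᵀ * diagonal D)) := by
  let i : Fin n := ⟨0, by omega⟩
  let j : Fin n := ⟨1, by omega⟩
  have hij : i ≠ j := by simp [i, j]
  by_cases h : L (single i j 1) i j = 0
  · have h1 := hL.rel1 hij
    rw [h, zero_mul, zero_add] at h1
    have h2 := right_ne_zero_of_mul_eq_one h1
    obtain ⟨D, hD, hX⟩ := hL.trans.caseA hij (by simpa using h2)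
    refine ⟨D, hD, Or.inr fun X => ?_⟩
    have := hX Xᵀ
    simpa using this
  · obtain ⟨D, hD, hX⟩ := hL.caseA hij h
    exact ⟨D, hD, Or.inl hX⟩

end GLss

open Matrix
namespace GLss
variable {n : ℕ}

lemma main (hn : 3 ≤ n) {φ : Matrix (Fin n) (Fin n) ℂ → Matrix (Fin n) (Fin n) ℂ}
    (hφ : Good φ) : ∃ T : Matrix (Fin n) (Fin n) ℂ, IsUnit T ∧
      ((∀ X, Dom X → φ X = T * X * T⁻¹) ∨ (∀ X, Dom X → φ X = T * Xᵀ * T⁻¹)) := by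
  obtain ⟨Q, S, hQ, hT⟩ := torusL hn hφ (Matrix.one_mul (1 : Matrix (Fin n) (Fin n) ℂ))
  have hS : S * Q = 1 := mul_eq_one_comm.mp hQ
  let L' : Matrix (Fin n) (Fin n) ℂ →ₗ[ℂ] Matrix (Fin n) (Fin n) ℂ :=
    { toFun := fun X => S * Lmap φ X * Q
      map_add' := by intro X Y; simp [Matrix.mul_add, Matrix.add_mul]
      map_smul' := by intro c X; simp }
  have hL'a : ∀ X, L' X = S * Lmap φ X * Q := fun _ => rfl
  have hL' : JD L' := by
    constructor
    · intro X Y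
      have hc : ∀ A B : Matrix (Fin n) (Fin n) ℂ, (S * A * Q) * (S * B * Q) = S * (A * B) * Q := by
        intro A B
        calc (S * A * Q) * (S * B * Q) = S * A * (Q * S) * B * Q := by
              simp only [Matrix.mul_assoc]
          _ = _ := by rw [hQ, Matrix.mul_one]; simp only [Matrix.mul_assoc]
      rw [hL'a, hL'a, hL'a, hc, hc, jordan hn hφ, Matrix.mul_add, Matrix.add_mul]
    · intro d
      have := hT d
      rw [Matrix.one_mul, Matrix.mul_one] at this
      rw [hL'a, this]
      calc S * (Q * diagonal d * S) * Q = (S * Q) * diagonal d * (S * Q) := by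
            simp only [Matrix.mul_assoc]
        _ = _ := by rw [hS, Matrix.one_mul, Matrix.mul_one]
  have hback : ∀ X, Lmap φ X = Q * L' X * S := by
    intro X
    rw [hL'a]
    calc Lmap φ X = (Q * S) * Lmap φ X * (Q * S) := by rw [hQ, Matrix.one_mul, Matrix.mul_one]
      _ = _ := by simp only [Matrix.mul_assoc]
  obtain ⟨D, hD, hcl⟩ := hL'.classify hn
  have hDD : diagonal (fun i => (D i)⁻¹) * diagonal D = (1 : Matrix (Fin n) (Fin n) ℂ) := by
    rw [diagonal_mul_diagonal, ← diagonal_one]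
    congr 1; funext i; exact inv_mul_cancel₀ (hD i)
  have hTT : (Q * diagonal (fun i => (D i)⁻¹)) * (diagonal D * S) = 1 := by
    calc (Q * diagonal (fun i => (D i)⁻¹)) * (diagonal D * S)
        = Q * (diagonal (fun i => (D i)⁻¹) * diagonal D) * S := by simp only [Matrix.mul_assoc]
      _ = 1 := by rw [hDD, Matrix.mul_one, hQ]
  refine ⟨Q * diagonal (fun i => (D i)⁻¹), ?_, ?_⟩
  · exact (Matrix.isUnit_iff_isUnit_det _).mpr (Matrix.isUnit_det_of_right_inverse hTT)
  · rw [Matrix.inv_eq_right_inv hTT]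
    rcases hcl with h | h
    · left
      intro X hX
      rw [phi_L hn hφ hX, hback, h]
      simp only [Matrix.mul_assoc]
    · right
      intro X hX
      rw [phi_L hn hφ hX, hback, h]
      simp only [Matrix.mul_assoc]

end GLss

theorem preserver_GLn_ss_iff (n : ℕ) (hn : 3 ≤ n)
    (φ : {X : Matrix (Fin n) (Fin n) ℂ // IsUnit X ∧
        ∃ P : Matrix (Fin n) (Fin n) ℂ, ∃ d : Fin n → ℂ,
          IsUnit P ∧ X = P * Matrix.diagonal d * P⁻¹} → Matrix (Fin n) (Fin n) ℂ) :
    (Continuous φ ∧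
      (∀ X Y, X.val * Y.val = Y.val * X.val → φ X * φ Y = φ Y * φ X) ∧
      (∀ X, spectrum ℂ (φ X) ⊆ spectrum ℂ X.val)) ↔
    (∃ T : Matrix (Fin n) (Fin n) ℂ, IsUnit T ∧
      ((∀ X, φ X = T * X.val * T⁻¹) ∨ (∀ X, φ X = T * X.val.transpose * T⁻¹))) := by
  classical
  constructor
  · rintro ⟨hc, hcomm, hs⟩
    let ψ : Matrix (Fin n) (Fin n) ℂ → Matrix (Fin n) (Fin n) ℂ :=
      fun X => if h : GLss.Dom X then φ ⟨X, h⟩ else 0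
    have hψ : ∀ X (h : GLss.Dom X), ψ X = φ ⟨X, h⟩ := fun X h => by simp [ψ, h]
    have hgood : GLss.Good ψ := by
      constructor
      · rw [continuousOn_iff_continuous_domRestrict]
        refine hc.congr ?_
        rintro ⟨X, hX⟩
        exact (hψ X hX).symm
      · intro X Y hX hY hXY
        rw [hψ X hX, hψ Y hY]
        exact hcomm _ _ hXY
      · intro X hX
        rw [hψ X hX]
        exact hs _
    obtain ⟨T, hT, h⟩ := GLss.main hn hgood
    refine ⟨T, hT, ?_⟩
    rcases h with h | h
    · left
      rintro ⟨X, hX⟩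
      rw [← hψ X hX]; exact h X hX
    · right
      rintro ⟨X, hX⟩
      rw [← hψ X hX]; exact h X hX
  · rintro ⟨T, hT, h⟩
    have hdet : IsUnit T.det := (Matrix.isUnit_iff_isUnit_det T).mp hT
    have h1 : T * T⁻¹ = 1 := Matrix.mul_nonsing_inv T hdet
    have h2 : T⁻¹ * T = 1 := Matrix.nonsing_inv_mul T hdet
    have hm : ∀ A B : Matrix (Fin n) (Fin n) ℂ,
        (T * A * T⁻¹) * (T * B * T⁻¹) = T * (A * B) * T⁻¹ := by
      intro A B
      calc (T * A * T⁻¹) * (T * B * T⁻¹) = T * A * (T⁻¹ * T) * B * T⁻¹ := by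
            simp only [Matrix.mul_assoc]
        _ = _ := by rw [h2, Matrix.mul_one]; simp only [Matrix.mul_assoc]
    rcases h with h | h
    · refine ⟨?_, ?_, ?_⟩
      · rw [funext h]
        fun_prop
      · intro X Y hXY
        rw [h, h, hm, hm, hXY]
      · intro X
        rw [h, GLss.spec_conj h1]
    · refine ⟨?_, ?_, ?_⟩
      · rw [funext h]
        fun_prop
      · intro X Y hXY
        rw [h, h, hm, hm, ← Matrix.transpose_mul, ← Matrix.transpose_mul, hXY]
      · intro X
        rw [h, GLss.spec_conj h1, GLss.spec_transpose]
end

section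
/- Let n ≥ 1, let S, T ∈ GL(n) be positive definite matrices and let N, M be normal n×n complex matrices. If S N S⁻¹ = T M T⁻¹, then S⁻¹ N S = T⁻¹ M T. Moreover, if S N S⁻¹ and T M T⁻¹ commute, then S⁻¹ N S and T⁻¹ M T commute. Consequently, the assignment Θ(S N S⁻¹) := S⁻¹ N S is a well-defined, spectrum-preserving and commutativity-preserving map on the set of diagonalizable invertible matrices. -/
open Matrix
open scoped ComplexOrder

lemma fuglede_aux {n : ℕ} (X N M : Matrix (Fin n) (Fin n) ℂ)
    (hN : N * Nᴴ = Nᴴ * N) (hM : M * Mᴴ = Mᴴ * M) (h : X * N = M * X) :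
    X * Nᴴ = Mᴴ * X := by
  have h1 : @SemiconjBy (CStarMatrix (Fin n) (Fin n) ℂ) _ X N M := h
  have hN' : @IsStarNormal (CStarMatrix (Fin n) (Fin n) ℂ) _ _ N := ⟨hN.symm⟩
  have hM' : @IsStarNormal (CStarMatrix (Fin n) (Fin n) ℂ) _ _ M := ⟨hM.symm⟩
  exact h1.star_right hN' hM'

/-- If `Y` commutes with `S N S⁻¹` then it commutes with `S Nᴴ S⁻¹`. -/
lemma fuglede_conj_aux {n : ℕ} (Y S s N : Matrix (Fin n) (Fin n) ℂ)
    (h1 : S * s = 1) (h2 : s * S = 1)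
    (hN : N * Nᴴ = Nᴴ * N) (h : Y * (S * N * s) = (S * N * s) * Y) :
    Y * (S * Nᴴ * s) = (S * Nᴴ * s) * Y := by
  have key := fuglede_aux (s * Y * S) N N hN hN (by
    calc s * Y * S * N = s * (Y * (S * N * s)) * S := by
          simp only [Matrix.mul_assoc, h2, Matrix.mul_one]
      _ = (s * S) * N * (s * Y * S) := by rw [h]; simp only [Matrix.mul_assoc]
      _ = _ := by rw [h2, Matrix.one_mul])
  calc Y * (S * Nᴴ * s) = (S * s) * Y * S * Nᴴ * s := by
        rw [h1, Matrix.one_mul]; simp only [Matrix.mul_assoc]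
    _ = S * (s * Y * S * Nᴴ) * s := by simp only [Matrix.mul_assoc]
    _ = S * Nᴴ * s * Y * (S * s) := by rw [key]; simp only [Matrix.mul_assoc]
    _ = _ := by rw [h1, Matrix.mul_one]

/-- (Putnam–Fuglede application.)  Let `S, T` be positive definite
invertible matrices and `N, M` normal matrices.  If `S N S⁻¹ = T M T⁻¹` then
`S⁻¹ N S = T⁻¹ M T`; if `S N S⁻¹` and `T M T⁻¹` commute then so do `S⁻¹ N S` and
`T⁻¹ M T`; and the resulting assignment `Θ(S N S⁻¹) = S⁻¹ N S` is spectrum-preserving. -/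
theorem putnam_fuglede_theta (n : ℕ) (hn : 1 ≤ n)
    (S T N M : Matrix (Fin n) (Fin n) ℂ)
    (hS : S.PosDef) (hT : T.PosDef) (hSunit : IsUnit S) (hTunit : IsUnit T)
    (hN : N * N.conjTranspose = N.conjTranspose * N)
    (hM : M * M.conjTranspose = M.conjTranspose * M) :
    (S * N * S⁻¹ = T * M * T⁻¹ → S⁻¹ * N * S = T⁻¹ * M * T) ∧
    ((S * N * S⁻¹) * (T * M * T⁻¹) = (T * M * T⁻¹) * (S * N * S⁻¹) →
      (S⁻¹ * N * S) * (T⁻¹ * M * T) = (T⁻¹ * M * T) * (S⁻¹ * N * S)) ∧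
    spectrum ℂ (S⁻¹ * N * S) = spectrum ℂ (S * N * S⁻¹) := by
  have dS := (Matrix.isUnit_iff_isUnit_det S).1 hSunit
  have dT := (Matrix.isUnit_iff_isUnit_det T).1 hTunit
  have S1 := Matrix.mul_nonsing_inv S dS
  have S2 := Matrix.nonsing_inv_mul S dS
  have T1 := Matrix.mul_nonsing_inv T dT
  have T2 := Matrix.nonsing_inv_mul T dT
  have Sh : Sᴴ = S := hS.1
  have Th : Tᴴ = T := hT.1
  have sh : S⁻¹ᴴ = S⁻¹ := by rw [Matrix.conjTranspose_nonsing_inv, Sh]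
  have th : T⁻¹ᴴ = T⁻¹ := by rw [Matrix.conjTranspose_nonsing_inv, Th]
  refine ⟨fun h => ?_, fun h => ?_, ?_⟩
  · have key := fuglede_aux (T⁻¹ * S) N M hN hM (by
      calc T⁻¹ * S * N = T⁻¹ * (S * N * S⁻¹) * S := by
            simp only [Matrix.mul_assoc, S2, Matrix.mul_one]
        _ = (T⁻¹ * T) * M * (T⁻¹ * S) := by rw [h]; simp only [Matrix.mul_assoc]
        _ = _ := by rw [T2, Matrix.one_mul])
    have key2 := congrArg Matrix.conjTranspose key
    simp only [Matrix.conjTranspose_mul, Matrix.conjTranspose_conjTranspose, Sh, th] at key2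
    calc S⁻¹ * N * S = S⁻¹ * (N * (S * T⁻¹)) * T := by
          simp only [Matrix.mul_assoc, T2, Matrix.mul_one]
      _ = (S⁻¹ * S) * T⁻¹ * M * T := by rw [key2]; simp only [Matrix.mul_assoc]
      _ = _ := by rw [S2, Matrix.one_mul]
  · have k1 := fuglede_conj_aux (T * M * T⁻¹) S S⁻¹ N S1 S2 hN h.symm
    have k2 := fuglede_conj_aux (S * Nᴴ * S⁻¹) T T⁻¹ M T1 T2 hM k1.symm
    have k3 := congrArg Matrix.conjTranspose k2
    simp only [Matrix.conjTranspose_mul, Matrix.conjTranspose_conjTranspose, Sh, th, sh, Th] at k3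
    simp only [Matrix.mul_assoc] at k3 ⊢
    exact k3.symm
  · obtain ⟨u, rfl⟩ := hSunit
    rw [← Matrix.coe_units_inv, spectrum.units_conjugate, spectrum.units_conjugate']
end
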